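/- arXiv:1110.1963 — 2 statements merged into one kernel-verified Lean document; each statement's English description precedes it below -/
import Mathlib

section
/- Let S' = K[x_1,…,x_{n-1}], S = S'[x_n], and let V ⊆ U be square-free monomial ideals of S' with U ≠ V; set W = (V + x_n U)S. If depth_{S'} (S'/U) = depth_{S'} (S'/V) = depth_{S'} (U/V), then depth_S (S/W) = depth_{S'} (S'/U). -/
open MvPolynomial

/-- The square-free monomial `∏ i ∈ T, X i` associated to a set `T` of variables. -/
noncomputable def sqMon (K : Type) [Field K] {n : ℕ} (T : Finset (Fin n)) :
    MvPolynomial (Fin n) K :=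
  ∏ i ∈ T, X i

/-- `GenBySqMonOfDeg K P I` means: `I` is generated by square-free monomials whose
degrees satisfy the predicate `P`. -/
def GenBySqMonOfDeg (K : Type) [Field K] {n : ℕ} (P : ℕ → Prop)
    (I : Ideal (MvPolynomial (Fin n) K)) : Prop :=
  ∃ G : Set (Finset (Fin n)), (∀ T ∈ G, P T.card) ∧ I = Ideal.span (sqMon K '' G)

/-- `rho K d I` : the number of square-free monomials of degree `d` belonging to `I`. -/
noncomputable def rho (K : Type) [Field K] {n : ℕ} (d : ℕ)
    (I : Ideal (MvPolynomial (Fin n) K)) : ℕ :=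
  Set.ncard {T : Finset (Fin n) | T.card = d ∧ sqMon K T ∈ I}

/-- The maximal graded ideal `(x_1, …, x_n)` of `K[x_1, …, x_n]`. -/
noncomputable def maxGraded (K : Type) [Field K] (n : ℕ) :
    Ideal (MvPolynomial (Fin n) K) :=
  Ideal.span (Set.range (X : Fin n → MvPolynomial (Fin n) K))

/-- The depth of the module `M` with respect to the ideal `I` : the supremum of the
lengths of `M`-regular sequences consisting of elements of `I`. -/
noncomputable def moduleDepth {R : Type} [CommRing R] (I : Ideal R)
    (M : Type) [AddCommGroup M] [Module R M] : ℕ∞ :=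
  sSup {k : ℕ∞ | ∃ rs : List R, k = (rs.length : ℕ∞) ∧ (∀ r ∈ rs, r ∈ I) ∧
    RingTheory.Sequence.IsRegular M rs}

/-- The `R`-module `I/J` (more precisely `I/(I ∩ J)`, which is `I/J` when `J ≤ I`). -/
noncomputable abbrev idealQuot {R : Type} [CommRing R] (I J : Ideal R) : Type :=
  ↥I ⧸ (Submodule.comap I.subtype (J : Submodule R R))

/-!
Let `π : S → S'` be the retraction killing `x_n`. Then `W = π⁻¹(V) ∩ US`, so `π` induces a bijection
from `US/W` onto `U/V` which is semilinear over `π`, and the two modules have the same depth. Since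
`S` is faithfully flat over `S'`, a regular sequence on `S'/U` stays regular on `S/US`, whence
`depth S/US ≥ depth S'/U ≥ depth U/V`. In `0 → US/W → S/W → S/US → 0` the depth of the left term is
therefore at most that of the right one, and the long exact sequence of `Ext(S/𝔪, -)`, combined with
Rees' characterization of depth, gives `depth S/W = depth US/W`. Rees' theorem needs
`𝔪 (U/V) ≠ U/V`, which is Nakayama's lemma for graded modules.
-/

section Depth

open CategoryTheory Abelian

variable {R : Type} [CommRing R]

/-- The modules `Extⁱ(R/I, M)` vanish for all `i < k`. By Rees' theorem this is the homological
form of `k ≤ moduleDepth I M`. -/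
def ExtVanishesBelow (I : Ideal R) (M : Type) [AddCommGroup M] [Module R M] (k : ℕ) : Prop :=
  ∀ i < k, Subsingleton (Ext (ModuleCat.of R (R ⧸ I)) (ModuleCat.of R M) i)

theorem smul_top_eq_top_of_sup_annihilator_eq_top {I : Ideal R} {M : Type} [AddCommGroup M]
    [Module R M] (h : I ⊔ Module.annihilator R M = ⊤) : I • (⊤ : Submodule R M) = ⊤ :=
  calc I • (⊤ : Submodule R M)
      = (I ⊔ Module.annihilator R M) • ⊤ := by
        rw [Submodule.sup_smul, ← Submodule.annihilator_top, Submodule.annihilator_smul, sup_bot_eq]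
    _ = ⊤ := by rw [h, Submodule.top_smul]

theorem smul_top_eq_top_iff_sup_annihilator_eq_top {I : Ideal R} {M : Type} [AddCommGroup M]
    [Module R M] [Module.Finite R M] :
    I • (⊤ : Submodule R M) = ⊤ ↔ I ⊔ Module.annihilator R M = ⊤ := by
  refine ⟨fun h ↦ ?_, smul_top_eq_top_of_sup_annihilator_eq_top⟩
  obtain ⟨r, hr, hrM⟩ := Submodule.exists_sub_one_mem_and_smul_eq_zero_of_fg_of_le_smul I
    (⊤ : Submodule R M) Module.Finite.fg_top h.ge
  have hr_mem : r ∈ Module.annihilator R M :=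
    Module.mem_annihilator.2 fun m ↦ hrM m Submodule.mem_top
  rw [Ideal.eq_top_iff_one, ← sub_sub_cancel r 1]
  exact sub_mem (Ideal.mem_sup_right hr_mem) (Ideal.mem_sup_left hr)

theorem smul_top_ne_top_of_injective {I : Ideal R} {M N : Type} [AddCommGroup M] [Module R M]
    [AddCommGroup N] [Module R N] [Module.Finite R N] (f : M →ₗ[R] N)
    (hf : Function.Injective f) (hM : I • (⊤ : Submodule R M) ≠ ⊤) :
    I • (⊤ : Submodule R N) ≠ ⊤ := fun hN ↦
  hM <| smul_top_eq_top_of_sup_annihilator_eq_top <| top_unique <|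
    (smul_top_eq_top_iff_sup_annihilator_eq_top.1 hN).ge.trans
      (sup_le_sup_left (f.annihilator_le_of_injective hf) I)

theorem smul_id_eq_zero_of_mem_annihilator {M : ModuleCat.{0} R} {r : R}
    (hr : r ∈ Module.annihilator R M) : r • 𝟙 M = 0 := by
  rw [← ModuleCat.lsmul_eq_smul_id, Module.mem_annihilator_iff_lsmul_eq_zero.1 hr]
  rfl

theorem subsingleton_ext_of_annihilator_sup_annihilator_eq_top {N M : ModuleCat.{0} R}
    (h : Module.annihilator R N ⊔ Module.annihilator R M = ⊤) (i : ℕ) :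
    Subsingleton (Ext N M i) := by
  obtain ⟨a, ha, b, hb, hab⟩ := Submodule.mem_sup.1 (h ▸ Submodule.mem_top : (1 : R) ∈ _)
  refine subsingleton_of_forall_eq 0 fun x ↦ ?_
  have hax : a • x = 0 := by
    calc a • x = (Ext.mk₀ (a • 𝟙 N)).comp x (zero_add i) := by simp [Ext.mk₀_smul]
      _ = 0 := by rw [smul_id_eq_zero_of_mem_annihilator ha, Ext.mk₀_zero, Ext.zero_comp]
  have hbx : b • x = 0 := by
    calc b • x = x.comp (Ext.mk₀ (b • 𝟙 M)) (add_zero i) := by simp [Ext.mk₀_smul]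
      _ = 0 := by rw [smul_id_eq_zero_of_mem_annihilator hb, Ext.mk₀_zero, Ext.comp_zero]
  rw [← one_smul R x, ← hab, add_smul, hax, hbx, add_zero]

theorem exists_isRegular_of_le_moduleDepth {I : Ideal R} {M : Type} [AddCommGroup M] [Module R M]
    {k : ℕ} (hk : k ≠ 0) (h : (k : ℕ∞) ≤ moduleDepth I M) :
    ∃ rs : List R, k ≤ rs.length ∧ (∀ r ∈ rs, r ∈ I) ∧ RingTheory.Sequence.IsRegular M rs := by
  obtain ⟨j, rfl⟩ := Nat.exists_eq_succ_of_ne_zero hk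
  obtain ⟨_, ⟨rs, rfl, hrs, hreg⟩, hlt⟩ :=
    lt_sSup_iff.1 ((Nat.cast_lt.2 j.lt_succ_self).trans_le h)
  exact ⟨rs, Nat.cast_lt.1 hlt, hrs, hreg⟩

theorem support_quotient_eq_zeroLocus (I : Ideal R) :
    Module.support R (R ⧸ I) = PrimeSpectrum.zeroLocus I := by
  rw [Module.support_eq_zeroLocus, Ideal.annihilator_quotient]

theorem ExtVanishesBelow.of_le_moduleDepth [IsNoetherianRing R] {I : Ideal R} {M : Type}
    [AddCommGroup M] [Module R M] [Module.Finite R M] {k : ℕ}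
    (h : (k : ℕ∞) ≤ moduleDepth I M) : ExtVanishesBelow I M k := by
  intro i hik
  by_cases hI : I • (⊤ : Submodule R M) = ⊤
  · exact subsingleton_ext_of_annihilator_sup_annihilator_eq_top
      (by simpa only [Ideal.annihilator_quotient] using
        smul_top_eq_top_iff_sup_annihilator_eq_top.1 hI) i
  · obtain ⟨rs, hlen, hrs, hreg⟩ := exists_isRegular_of_le_moduleDepth (by omega) h
    exact ModuleCat.subsingleton_ext_of_exists_isRegular I (ModuleCat.of R (R ⧸ I))
      (support_quotient_eq_zeroLocus I).le (ModuleCat.of R M) (lt_top_iff_ne_top.2 hI) rs hrs hreg i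
      (by omega)

theorem ExtVanishesBelow.le_moduleDepth [IsNoetherianRing R] {I : Ideal R} {M : Type}
    [AddCommGroup M] [Module R M] [Module.Finite R M] (hI : I • (⊤ : Submodule R M) ≠ ⊤) {k : ℕ}
    (h : ExtVanishesBelow I M k) : (k : ℕ∞) ≤ moduleDepth I M := by
  obtain ⟨rs, hlen, hrs, hreg⟩ := ModuleCat.exists_isRegular_of_exists_subsingleton_ext I k
    (ModuleCat.of R M) (lt_top_iff_ne_top.2 hI) (ModuleCat.of R (R ⧸ I))
    (support_quotient_eq_zeroLocus I) h
  exact le_sSup ⟨rs, by rw [hlen], hrs, hreg⟩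

section ShortExact

variable {I : Ideal R} {A B C : Type} [AddCommGroup A] [Module R A] [AddCommGroup B] [Module R B]
  [AddCommGroup C] [Module R C] {f : A →ₗ[R] B} {g : B →ₗ[R] C} {k : ℕ}

theorem ExtVanishesBelow.middle (hfg : Function.Exact f g) (hf : Function.Injective f)
    (hg : Function.Surjective g) (hA : ExtVanishesBelow I A k) (hC : ExtVanishesBelow I C k) :
    ExtVanishesBelow I B k := by
  intro i hik
  have hA_i := hA i hik
  have hC_i := hC i hik
  refine subsingleton_of_forall_eq 0 fun x ↦ ?_
  obtain ⟨y, rfl⟩ := Ext.covariant_sequence_exact₂ _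
    (ModuleCat.shortComplex_shortExact
      (ModuleCat.shortComplexOfCompEqZero f g hfg.linearMap_comp_eq_zero) hfg hf hg) x
    (hC_i.elim _ _)
  rw [hA_i.elim y 0, Ext.zero_comp]

theorem ExtVanishesBelow.left (hfg : Function.Exact f g) (hf : Function.Injective f)
    (hg : Function.Surjective g) (hB : ExtVanishesBelow I B (k + 1))
    (hC : ExtVanishesBelow I C k) : ExtVanishesBelow I A (k + 1) := by
  intro i hik
  have hS := ModuleCat.shortComplex_shortExact
    (ModuleCat.shortComplexOfCompEqZero f g hfg.linearMap_comp_eq_zero) hfg hf hg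
  refine subsingleton_of_forall_eq 0 fun x ↦ ?_
  cases i with
  | zero =>
    have := hS.mono_f
    exact Ext.postcomp_mk₀_injective_of_mono (ModuleCat.of R (R ⧸ I))
      (ModuleCat.shortComplexOfCompEqZero f g hfg.linearMap_comp_eq_zero).f
      ((hB 0 hik).elim _ _)
  | succ i =>
    obtain ⟨y, rfl⟩ := Ext.covariant_sequence_exact₁ _ hS x ((hB _ hik).elim _ _) rfl
    rw [(hC i (by omega)).elim y 0, Ext.zero_comp]

theorem moduleDepth_middle_eq_left [IsNoetherianRing R] [Module.Finite R B]
    (hfg : Function.Exact f g) (hf : Function.Injective f)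
    (hg : Function.Surjective g) (hA : I • (⊤ : Submodule R A) ≠ ⊤)
    (hAC : moduleDepth I A ≤ moduleDepth I C) : moduleDepth I B = moduleDepth I A := by
  have := Module.Finite.of_injective f hf
  have := Module.Finite.of_surjective g hg
  have hB : I • (⊤ : Submodule R B) ≠ ⊤ := smul_top_ne_top_of_injective f hf hA
  refine ENat.eq_of_forall_natCast_le_iff fun k ↦ ⟨fun h ↦ ?_, fun h ↦ ?_⟩
  · induction k with
    | zero => exact bot_le
    | succ k ih =>
      have hkA : (k : ℕ∞) ≤ moduleDepth I A := ih ((Nat.cast_le.2 k.le_succ).trans h)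
      exact ((ExtVanishesBelow.of_le_moduleDepth h).left hfg hf hg
        (ExtVanishesBelow.of_le_moduleDepth (hkA.trans hAC))).le_moduleDepth hA
  · exact ((ExtVanishesBelow.of_le_moduleDepth h).middle hfg hf hg
      (ExtVanishesBelow.of_le_moduleDepth (h.trans hAC))).le_moduleDepth hB

end ShortExact

end Depth

section ChangeOfRings

open TensorProduct RingTheory.Sequence

variable {R S : Type} [CommRing R] [CommRing S]

theorem isRegular_map_iff_of_bijective {σ : S →+* R} {N M : Type} [AddCommGroup N] [Module S N]
    [AddCommGroup M] [Module R M] (f : N →ₛₗ[σ] M) (hf : Function.Bijective f) {rs : List S} :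
    IsRegular N rs ↔ IsRegular M (rs.map σ) :=
  (AddEquiv.ofBijective f hf).isRegular_congr <| List.forall₂_map_right_iff.2 <|
    List.forall₂_same.2 fun r _ x ↦ f.map_smulₛₗ r x

theorem moduleDepth_comap_eq_of_bijective {σ : S →+* R} (hσ : Function.Surjective σ) (I : Ideal R)
    {N M : Type} [AddCommGroup N] [Module S N] [AddCommGroup M] [Module R M] (f : N →ₛₗ[σ] M)
    (hf : Function.Bijective f) : moduleDepth (I.comap σ) N = moduleDepth I M := by
  refine congrArg sSup (Set.ext fun k ↦ ⟨?_, ?_⟩)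
  · rintro ⟨ss, rfl, hss, hreg⟩
    exact ⟨ss.map σ, by rw [List.length_map], List.forall_mem_map.2 hss,
      (isRegular_map_iff_of_bijective f hf).1 hreg⟩
  · rintro ⟨rs, rfl, hrs, hreg⟩
    obtain ⟨ss, rfl⟩ := List.map_surjective_iff.2 hσ rs
    exact ⟨ss, by rw [List.length_map], fun s hs ↦ hrs _ (List.mem_map_of_mem hs),
      (isRegular_map_iff_of_bijective f hf).2 hreg⟩

theorem smul_top_ne_top_of_surjective {σ : S →+* R} {I : Ideal R} {N M : Type} [AddCommGroup N]
    [Module S N] [AddCommGroup M] [Module R M] (f : N →ₛₗ[σ] M) (hf : Function.Surjective f)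
    (hM : I • (⊤ : Submodule R M) ≠ ⊤) : I.comap σ • (⊤ : Submodule S N) ≠ ⊤ := by
  refine fun hN ↦ hM <| (Submodule.eq_top_iff').2 fun m ↦ ?_
  obtain ⟨x, rfl⟩ := hf m
  have hx : x ∈ I.comap σ • (⊤ : Submodule S N) := by
    rw [hN]
    exact Submodule.mem_top
  induction hx using Submodule.smul_induction_on' with
  | smul s hs y _ =>
    rw [f.map_smulₛₗ]
    exact Submodule.smul_mem_smul hs Submodule.mem_top
  | add y _ z _ hy hz =>
    rw [map_add]
    exact add_mem hy hz

variable [Algebra R S]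

theorem moduleDepth_le_of_isBaseChange [Module.FaithfullyFlat R S] {I : Ideal R} {J : Ideal S}
    (hIJ : I ≤ J.comap (algebraMap R S)) {M N : Type} [AddCommGroup M] [Module R M] [AddCommGroup N]
    [Module R N] [Module S N] [IsScalarTower R S N] {f : M →ₗ[R] N} (hf : IsBaseChange S f) :
    moduleDepth I M ≤ moduleDepth J N := by
  refine sSup_le_sSup ?_
  rintro _ ⟨rs, rfl, hrs, hreg⟩
  exact ⟨rs.map (algebraMap R S), by rw [List.length_map],
    List.forall_mem_map.2 fun r hr ↦ hIJ (hrs r hr), hreg.of_faithfullyFlat_of_isBaseChange hf⟩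

theorem moduleDepth_quotient_le_moduleDepth_quotient_map [Module.FaithfullyFlat R S] {I : Ideal R}
    {J : Ideal S} (hIJ : I ≤ J.comap (algebraMap R S)) (U : Ideal R) :
    moduleDepth I (R ⧸ U) ≤ moduleDepth J (S ⧸ U.map (algebraMap R S)) :=
  let e := (Algebra.TensorProduct.quotIdealMapEquivTensorQuot S U).symm.toLinearEquiv
  moduleDepth_le_of_isBaseChange hIJ <|
    .of_equiv (f := e.toLinearMap.restrictScalars R ∘ₗ TensorProduct.mk R S (R ⧸ U) 1) e
      fun _ ↦ rfl

theorem faithfullyFlat_of_augmentation [Module.Flat R S] (π : S →ₐ[R] R) :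
    Module.FaithfullyFlat R S := by
  refine .of_comap_surjective fun p ↦ ⟨p.comap π.toRingHom, ?_⟩
  rw [← PrimeSpectrum.comap_comp_apply, AlgHom.toRingHom_eq_coe, π.comp_algebraMap]
  exact PrimeSpectrum.ext (Ideal.comap_id _)

end ChangeOfRings

section Augmentation

variable {R S : Type} [CommRing R] [CommRing S]

theorem mapQ_injective_of_eq_comap {σ : S →+* R} {N M : Type} [AddCommGroup N] [Module S N]
    [AddCommGroup M] [Module R M] {p : Submodule S N} {q : Submodule R M} (f : N →ₛₗ[σ] M)
    (hp : p = q.comap f) : Function.Injective (p.mapQ q f hp.le) :=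
  LinearMap.ker_eq_bot.1 <| Submodule.ker_liftQ_eq_bot _ _ _ <| by
    rw [LinearMap.ker_comp, Submodule.ker_mkQ, hp]

theorem moduleDepth_quotient_eq_moduleDepth_idealQuot [IsNoetherianRing S] {J L W : Ideal S}
    (hWL : W ≤ L) (hJ : J • (⊤ : Submodule S (idealQuot L W)) ≠ ⊤)
    (h : moduleDepth J (idealQuot L W) ≤ moduleDepth J (S ⧸ L)) :
    moduleDepth J (S ⧸ W) = moduleDepth J (idealQuot L W) := by
  let f : idealQuot L W →ₗ[S] S ⧸ W := Submodule.mapQ _ W (Submodule.subtype L) le_rfl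
  let g : S ⧸ W →ₗ[S] S ⧸ L := Submodule.factor hWL
  have hfg : Function.Exact f g := by
    rw [LinearMap.exact_iff, Submodule.ker_mapQ, Submodule.comap_id, Submodule.range_mapQ,
      Submodule.range_subtype]
  exact moduleDepth_middle_eq_left hfg (mapQ_injective_of_eq_comap _ rfl)
    (Submodule.factor_surjective hWL) hJ h

variable [Algebra R S] (π : S →ₐ[R] R)

theorem augmentation_surjective : Function.Surjective π := fun r ↦ ⟨algebraMap R S r, π.commutes r⟩

theorem map_algebraMap_le_comap (U : Ideal R) : U.map (algebraMap R S) ≤ U.comap π :=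
  Ideal.map_le_iff_le_comap.2 fun r hr ↦ by
    rwa [Ideal.mem_comap, Ideal.mem_comap, π.commutes]

theorem sub_algebraMap_apply_mem_ker_mul_map {U : Ideal R} {u : S}
    (hu : u ∈ U.map (algebraMap R S)) :
    u - algebraMap R S (π u) ∈ RingHom.ker π * U.map (algebraMap R S) := by
  induction hu using Submodule.span_induction with
  | mem u hu =>
    obtain ⟨r, -, rfl⟩ := hu
    rw [π.commutes, Algebra.algebraMap_self_apply, sub_self]
    exact zero_mem _
  | zero => rw [map_zero, map_zero, sub_zero]; exact zero_mem _
  | add u v _ _ hu hv =>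
    rw [map_add, map_add, add_sub_add_comm]
    exact add_mem hu hv
  | smul s u hu_mem hu =>
    have hs : s - algebraMap R S (π s) ∈ RingHom.ker π := by
      rw [RingHom.mem_ker, map_sub, π.commutes, Algebra.algebraMap_self_apply, sub_self]
    have hsplit : s • u - algebraMap R S (π (s • u)) =
        (s - algebraMap R S (π s)) * u + algebraMap R S (π s) * (u - algebraMap R S (π u)) := by
      rw [smul_eq_mul, map_mul, map_mul]
      ring
    rw [hsplit]
    exact add_mem (Ideal.mul_mem_mul hs hu_mem) (Ideal.mul_mem_left _ _ hu)

theorem comap_inf_map_eq_map_sup_ker_mul_map {U V : Ideal R} (hVU : V ≤ U) :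
    V.comap π ⊓ U.map (algebraMap R S) =
      V.map (algebraMap R S) ⊔ RingHom.ker π * U.map (algebraMap R S) := by
  refine le_antisymm (fun u hu ↦ ?_) (sup_le (le_inf (map_algebraMap_le_comap π V)
    (Ideal.map_mono hVU)) (le_inf (Ideal.mul_le_left.trans (Ideal.ker_le_comap π))
    Ideal.mul_le_right))
  rw [← add_sub_cancel (algebraMap R S (π u)) u]
  exact Submodule.add_mem_sup (Ideal.mem_map_of_mem _ hu.1)
    (sub_algebraMap_apply_mem_ker_mul_map π hu.2)

theorem exists_bijective_idealQuot_comap_inf_map (U V : Ideal R) :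
    ∃ f : idealQuot (U.map (algebraMap R S)) (V.comap π ⊓ U.map (algebraMap R S))
      →ₛₗ[(π : S →+* R)] idealQuot U V, Function.Bijective f := by
  let f₀ : U.map (algebraMap R S) →ₛₗ[(π : S →+* R)] U :=
    (π : S →+* R).toSemilinearMap.restrict (map_algebraMap_le_comap π U)
  have hf₀ : Submodule.comap (U.map (algebraMap R S)).subtype (V.comap π ⊓ U.map (algebraMap R S)) =
      (Submodule.comap U.subtype V).comap f₀ :=
    Submodule.ext fun u ↦ and_iff_left u.2
  refine ⟨Submodule.mapQ _ _ f₀ hf₀.le, mapQ_injective_of_eq_comap f₀ hf₀, fun y ↦ ?_⟩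
  obtain ⟨⟨r, hr⟩, rfl⟩ := Submodule.mkQ_surjective _ y
  refine ⟨Submodule.mkQ _ ⟨algebraMap R S r, Ideal.mem_map_of_mem _ hr⟩, ?_⟩
  exact congrArg (Submodule.mkQ _) (Subtype.ext (π.commutes r))

theorem moduleDepth_quotient_comap_inf_map [IsNoetherianRing S] [Module.Flat R S] {I U V : Ideal R}
    (hI : I • (⊤ : Submodule R (idealQuot U V)) ≠ ⊤)
    (h : moduleDepth I (idealQuot U V) ≤ moduleDepth I (R ⧸ U)) :
    moduleDepth (I.comap π) (S ⧸ V.comap π ⊓ U.map (algebraMap R S)) =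
      moduleDepth I (idealQuot U V) := by
  have := faithfullyFlat_of_augmentation π
  obtain ⟨f, hf⟩ := exists_bijective_idealQuot_comap_inf_map π U V
  have hleft := moduleDepth_comap_eq_of_bijective (augmentation_surjective π) I f hf
  have hright := moduleDepth_quotient_le_moduleDepth_quotient_map
    (Ideal.map_le_iff_le_comap.1 (map_algebraMap_le_comap π I)) U
  have htop := smul_top_ne_top_of_surjective f hf.surjective hI
  exact (moduleDepth_quotient_eq_moduleDepth_idealQuot inf_le_right htop
    (hleft.trans_le (h.trans hright))).trans hleft

end Augmentation

section Graded

theorem smul_top_idealQuot_ne_top_of_isHomogeneous {R σ : Type} [CommRing R] [SetLike σ R]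
    [AddSubmonoidClass σ R] {𝒜 : ℕ → σ} [GradedRing 𝒜] {I U V : Ideal R}
    (hI : I ≤ (HomogeneousIdeal.irrelevant 𝒜).toIdeal) (hU : U.IsHomogeneous 𝒜)
    (hV : V.IsHomogeneous 𝒜) (hU_fg : U.FG) (hUV : ¬ U ≤ V) :
    I • (⊤ : Submodule R (idealQuot U V)) ≠ ⊤ := by
  -- If `I (U/V) = U/V`, some `b` with `b₀ = 1` satisfies `b U ⊆ V`; for `u ∈ U` the degree `i`
  -- component of `b uᵢ` is then `uᵢ`, so `u ∈ V`.
  have : Module.Finite R U := Module.Finite.iff_fg.2 hU_fg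
  rw [ne_eq, smul_top_eq_top_iff_sup_annihilator_eq_top]
  intro htop
  obtain ⟨a, ha, b, hb, hab⟩ := Submodule.mem_sup.1 (htop ▸ Submodule.mem_top : (1 : R) ∈ _)
  have hbU (u : R) (hu : u ∈ U) : b * u ∈ V :=
    (Submodule.Quotient.mk_eq_zero (Submodule.comap U.subtype V) (x := b • (⟨u, hu⟩ : U))).1 <|
      Module.mem_annihilator.1 hb (Submodule.Quotient.mk ⟨u, hu⟩)
  have hb_zero : (DirectSum.decompose 𝒜 b 0 : R) = 1 := by
    have ha_zero : (DirectSum.decompose 𝒜 a 0 : R) = 0 :=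
      (HomogeneousIdeal.mem_irrelevant_iff 𝒜 a).1 (hI ha)
    rw [← DirectSum.decompose_of_mem_same 𝒜 (SetLike.GradedOne.one_mem (A := 𝒜)), ← hab,
      DirectSum.decompose_add, DirectSum.add_apply, AddMemClass.coe_add, ha_zero, zero_add]
  refine hUV fun u hu ↦ hV.mem_iff.2 fun i ↦ ?_
  have hi := hV i (hbU _ (hU i hu))
  rwa [DirectSum.coe_decompose_mul_of_right_mem_of_le 𝒜 (SetLike.coe_mem _) le_rfl, tsub_self,
    hb_zero, one_mul] at hi

end Graded

section Polynomial

attribute [local instance] MvPolynomial.gradedAlgebra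

variable {σ τ R : Type}

theorem mem_idealOfVars_iff [CommSemiring R] {p : MvPolynomial σ R} :
    p ∈ idealOfVars σ R ↔ p.coeff 0 = 0 := by
  rw [← pow_one (idealOfVars σ R), mem_pow_idealOfVars_iff']
  simp only [Nat.lt_one_iff, Finsupp.degree_eq_zero_iff, forall_eq]

theorem comap_killCompl_idealOfVars [CommSemiring R] {f : σ → τ} (hf : Function.Injective f) :
    (idealOfVars σ R).comap (killCompl hf) = idealOfVars τ R := by
  ext p
  rw [Ideal.mem_comap, mem_idealOfVars_iff, mem_idealOfVars_iff, coeff_killCompl,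
    Finsupp.mapDomain_zero]

theorem ker_killCompl [CommSemiring R] {f : σ → τ} (hf : Function.Injective f) :
    RingHom.ker (killCompl hf : MvPolynomial τ R →ₐ[R] MvPolynomial σ R) =
      Ideal.span (X '' (Set.range f)ᶜ) := by
  ext p
  rw [mem_ideal_span_X_image, RingHom.mem_ker]
  constructor
  · intro hp m hm
    by_contra! hm_range
    have hm_support : (m.support : Set τ) ⊆ Set.range f := fun i hi ↦
      by_contra fun hif ↦ Finsupp.mem_support_iff.1 hi (hm_range i hif)
    rw [mem_support_iff, ← Finsupp.mapDomain_comapDomain f hf m hm_support,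
      ← coeff_killCompl hf] at hm
    exact hm ((congrArg _ hp).trans (coeff_zero _))
  · refine fun hp ↦ MvPolynomial.ext _ _ fun m ↦ ?_
    rw [coeff_killCompl, coeff_zero]
    by_contra hm
    obtain ⟨i, hi, hmi⟩ := hp _ (mem_support_iff.2 hm)
    exact hmi (Finsupp.mapDomain_of_notMem_range m i hi)

theorem flat_rename [CommRing R] {f : σ → τ} (hf : Function.Injective f) :
    (rename f : MvPolynomial σ R →ₐ[R] MvPolynomial τ R).toRingHom.Flat := by
  classical
  let e : (↥(Set.range f)ᶜ) ⊕ σ ≃ τ :=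
    (Equiv.sumComm _ _).trans <|
      ((Equiv.ofInjective f hf).sumCongr (Equiv.refl _)).trans (Equiv.Set.sumCompl (Set.range f))
  let φ : MvPolynomial (↥(Set.range f)ᶜ) (MvPolynomial σ R) ≃ₐ[R] MvPolynomial τ R :=
    (sumAlgEquiv R _ _).symm.trans (renameEquiv R e)
  have hφ : (rename f : MvPolynomial σ R →ₐ[R] MvPolynomial τ R) =
      φ.toAlgHom.comp (IsScalarTower.toAlgHom R _ _) := by
    refine MvPolynomial.algHom_ext fun i ↦ ?_
    simp [φ, e]
  rw [hφ]
  exact .comp (RingHom.flat_algebraMap_iff.2 inferInstance) (.of_bijective φ.bijective)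

theorem idealOfVars_le_irrelevant [CommSemiring R] :
    idealOfVars σ R ≤ (HomogeneousIdeal.irrelevant (homogeneousSubmodule σ R)).toIdeal :=
  Ideal.span_le.2 <| Set.range_subset_iff.2 fun i ↦
    HomogeneousIdeal.mem_irrelevant_of_mem _ Nat.one_pos (isHomogeneous_X R i)

theorem GenBySqMonOfDeg.isHomogeneous {K : Type} [Field K] {n : ℕ} {P : ℕ → Prop}
    {I : Ideal (MvPolynomial (Fin n) K)} (hI : GenBySqMonOfDeg K P I) :
    I.IsHomogeneous (homogeneousSubmodule (Fin n) K) := by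
  obtain ⟨G, -, rfl⟩ := hI
  refine Ideal.homogeneous_span _ _ ?_
  rintro _ ⟨T, -, rfl⟩
  exact ⟨_, IsHomogeneous.prod T _ _ fun i _ ↦ isHomogeneous_X K i⟩

theorem stmt_12_general [Finite τ] [CommRing R] [IsNoetherianRing R] {f : σ → τ}
    (hf : Function.Injective f) {U V : Ideal (MvPolynomial σ R)}
    (hU : U.IsHomogeneous (homogeneousSubmodule σ R))
    (hV : V.IsHomogeneous (homogeneousSubmodule σ R)) (hVU : V < U)
    (h : moduleDepth (idealOfVars σ R) (idealQuot U V) ≤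
      moduleDepth (idealOfVars σ R) (MvPolynomial σ R ⧸ U)) :
    moduleDepth (idealOfVars τ R) (MvPolynomial τ R ⧸
        V.map (rename f) ⊔ Ideal.span (X '' (Set.range f)ᶜ) * U.map (rename f)) =
      moduleDepth (idealOfVars σ R) (idealQuot U V) := by
  have := Finite.of_injective f hf
  let := (rename f : MvPolynomial σ R →ₐ[R] MvPolynomial τ R).toRingHom.toAlgebra
  have : Module.Flat (MvPolynomial σ R) (MvPolynomial τ R) := flat_rename hf
  let π : MvPolynomial τ R →ₐ[MvPolynomial σ R] MvPolynomial σ R :=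
    { killCompl hf with commutes' := killCompl_rename_app hf }
  have hm : idealOfVars τ R = (idealOfVars σ R).comap π := (comap_killCompl_idealOfVars hf).symm
  have hW : V.map (rename f) ⊔ Ideal.span (X '' (Set.range f)ᶜ) * U.map (rename f) =
      V.comap π ⊓ U.map (algebraMap _ (MvPolynomial τ R)) := by
    rw [comap_inf_map_eq_map_sup_ker_mul_map π hVU.le, ← ker_killCompl hf]
    rfl
  rw [hm, hW]
  exact moduleDepth_quotient_comap_inf_map π (smul_top_idealQuot_ne_top_of_isHomogeneous
    idealOfVars_le_irrelevant hU hV (IsNoetherian.noetherian U) hVU.not_ge) h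

end Polynomial

/-- Lemma 3.1.  Here `S' = K[x_1,…,x_n]` is embedded in
`S = S'[x_{n+1}] = K[x_1,…,x_{n+1}]` via `rename Fin.castSucc`, and the last
variable `X (Fin.last n)` plays the role of `x_n` of the paper. -/
theorem stmt_12 (n : ℕ) (K : Type) [Field K]
    (U V : Ideal (MvPolynomial (Fin n) K))
    (hU : GenBySqMonOfDeg K (fun _ => True) U)
    (hV : GenBySqMonOfDeg K (fun _ => True) V)
    (hVU : V ≤ U) (hne : U ≠ V)
    (W : Ideal (MvPolynomial (Fin (n + 1)) K))
    (hW : W = Ideal.map (rename Fin.castSucc) V +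
      Ideal.span {(X (Fin.last n) : MvPolynomial (Fin (n + 1)) K)} *
        Ideal.map (rename Fin.castSucc) U)
    (h1 : moduleDepth (maxGraded K n) (MvPolynomial (Fin n) K ⧸ U) =
      moduleDepth (maxGraded K n) (MvPolynomial (Fin n) K ⧸ V))
    (h2 : moduleDepth (maxGraded K n) (MvPolynomial (Fin n) K ⧸ V) =
      moduleDepth (maxGraded K n) (idealQuot U V)) :
    moduleDepth (maxGraded K (n + 1)) (MvPolynomial (Fin (n + 1)) K ⧸ W) =
      moduleDepth (maxGraded K n) (MvPolynomial (Fin n) K ⧸ U) := by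
  have hlast : (Set.range (Fin.castSucc : Fin n → Fin (n + 1)))ᶜ = {Fin.last n} := by
    rw [← Fin.succAbove_last, Fin.range_succAbove, compl_compl]
  rw [h1.trans h2, hW, ← Set.image_singleton, ← hlast]
  exact stmt_12_general (Fin.castSucc_injective n) hU.isHomogeneous hV.isHomogeneous
    (hVU.lt_of_ne hne.symm) (h1.trans h2).ge
end

section
/- Let d be a positive integer, I an ideal of S generated by square-free monomials of degree ≥ d, and let x_n f_1,…,x_n f_r (r > 0) be the square-free monomials of degree d in I ∩ (x_n). Set U = (f_1,…,f_r) ⊆ S' and V = I ∩ S'. If r > ρ_d(U) − ρ_d(U ∩ V), then depth_S (S/I) = depth_{S'} ((U+V)/V) = d − 1. -/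
open MvPolynomial

/-!
The Koszul complex of the variables is depth sensitive: the depth of `M` is the least degree in
which its Koszul cohomology does not vanish. Write `k = d - 1`.

For a quotient of square-free monomial ideals `A / B`, dividing out repeated variables is a homotopy
which reduces a cochain to its monomials `X^b e_T` with `b ≤ 1_T`. If `A` is generated in degrees at
least `k`, these only occur for `#T ≥ k`, so the cohomology vanishes below degree `k`. This applies
to `(U + V) / V`, and to `S / I` by shifting along `0 → I → S → S / I → 0`.

The differential of a scalar combination `∑ i, α i • f_i e_(f_i)` is a scalar combination of terms
`x^T e_T` with `x^T ∈ U` of degree `d`. At most `ρ_d(U) - ρ_d(U ∩ V) < r` of these terms lie outside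
`V`, so some nonzero combination is a cocycle modulo `V`, and also modulo `I` because `x_n f_i ∈ I`.
For degree reasons it is not a boundary, so the cohomology in degree `k` does not vanish.
-/

open scoped Finset Pointwise

section KoszulOperators

variable {ι : Type*} [LinearOrder ι]

/-- The sign produced by moving the generator `e i` past those generators of the exterior
monomial `e_T` that precede it. -/
def koszulSign (i : ι) (T : Finset ι) : ℤ :=
  (-1) ^ #{j ∈ T | j < i}

theorem koszulSign_mul_self (i : ι) (T : Finset ι) : koszulSign i T * koszulSign i T = 1 :=
  pow_mul_pow_eq_one _ (by norm_num)

theorem koszulSign_insert {i j : ι} {T : Finset ι} (hj : j ∉ T) :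
    koszulSign i (insert j T) = if j < i then -koszulSign i T else koszulSign i T := by
  unfold koszulSign
  split_ifs with hji
  · rw [Finset.filter_insert, if_pos hji, Finset.card_insert_of_notMem (by simp [hj]), pow_succ,
      mul_neg_one]
  · rw [Finset.filter_insert, if_neg hji]

theorem koszulSign_erase {i j : ι} {T : Finset ι} (hj : j ∈ T) :
    koszulSign i (T.erase j) = if j < i then -koszulSign i T else koszulSign i T := by
  rw [← Finset.insert_erase hj, koszulSign_insert (Finset.notMem_erase j T),
    Finset.insert_erase hj]
  split_ifs <;> simp

variable (R : Type*) [CommRing R] {M : Type*} [AddCommGroup M] [Module R M]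

/-- Left exterior multiplication by the generator `e i` on Koszul cochains. The family
`c : Finset ι → M` stands for the element `∑ T, c T • e_T` of `M ⊗ ⋀ R^ι`. -/
def koszulWedge (i : ι) : Module.End R (Finset ι → M) where
  toFun c T := if i ∈ T then koszulSign i T • c (T.erase i) else 0
  map_add' c c' := by ext T; dsimp only [Pi.add_apply]; split_ifs <;> simp
  map_smul' r c := by ext T; dsimp only [Pi.smul_apply]; split_ifs <;> simp [smul_comm r]

/-- Contraction of Koszul cochains with the dual of the generator `e i`. -/
def koszulContract (i : ι) : Module.End R (Finset ι → M) where
  toFun c T := if i ∈ T then 0 else koszulSign i T • c (insert i T)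
  map_add' c c' := by ext T; dsimp only [Pi.add_apply]; split_ifs <;> simp
  map_smul' r c := by ext T; dsimp only [Pi.smul_apply]; split_ifs <;> simp [smul_comm r]

theorem koszulWedge_apply (i : ι) (c : Finset ι → M) (T : Finset ι) :
    koszulWedge R i c T = if i ∈ T then koszulSign i T • c (T.erase i) else 0 :=
  rfl

theorem koszulContract_apply (i : ι) (c : Finset ι → M) (T : Finset ι) :
    koszulContract R i c T = if i ∈ T then 0 else koszulSign i T • c (insert i T) :=
  rfl

theorem koszulWedge_mul_self (i : ι) :
    koszulWedge R i * koszulWedge R i = (0 : Module.End R (Finset ι → M)) := by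
  ext c T
  simp [koszulWedge_apply]

theorem koszulWedge_anticomm {i j : ι} (hij : i ≠ j) :
    koszulWedge R i * koszulWedge R j + koszulWedge R j * koszulWedge R i =
      (0 : Module.End R (Finset ι → M)) := by
  ext c T
  rcases hij.lt_or_gt with h | h <;> by_cases hi : i ∈ T <;> by_cases hj : j ∈ T <;>
    simp [koszulWedge_apply, hi, hj, hij, hij.symm, h, h.not_gt, koszulSign_erase, smul_smul,
      mul_comm, Finset.erase_right_comm]

theorem koszulContract_anticomm_koszulWedge {i j : ι} (hij : i ≠ j) :
    koszulContract R i * koszulWedge R j + koszulWedge R j * koszulContract R i =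
      (0 : Module.End R (Finset ι → M)) := by
  ext c T
  rcases hij.lt_or_gt with h | h <;> by_cases hi : i ∈ T <;> by_cases hj : j ∈ T <;>
    simp [koszulWedge_apply, koszulContract_apply, hi, hj, hij, hij.symm, h, h.not_gt,
      koszulSign_erase, koszulSign_insert, smul_smul, mul_comm, Finset.erase_insert_of_ne]

theorem koszulContract_mul_koszulWedge_add (i : ι) :
    koszulContract R i * koszulWedge R i + koszulWedge R i * koszulContract R i =
      (1 : Module.End R (Finset ι → M)) := by
  ext c T
  by_cases hi : i ∈ T <;>
    simp [koszulWedge_apply, koszulContract_apply, hi, smul_smul, koszulSign_mul_self,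
      koszulSign_erase, koszulSign_insert]

variable {R} [Fintype ι]

/-- The Koszul differential `∑ i, x i • e i ∧ ·`. -/
def koszulDiff (x : ι → R) : Module.End R (Finset ι → M) :=
  ∑ i, x i • koszulWedge R i

theorem koszulDiff_apply (x : ι → R) (c : Finset ι → M) (T : Finset ι) :
    koszulDiff x c T = ∑ i, x i • koszulWedge R i c T := by
  simp [koszulDiff]

theorem koszulDiff_mul_self (x : ι → R) :
    koszulDiff x * koszulDiff x = (0 : Module.End R (Finset ι → M)) := by
  have anticomm (i j : ι) : (koszulWedge R i * koszulWedge R j : Module.End R (Finset ι → M)) +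
      koszulWedge R j * koszulWedge R i = 0 := by
    rcases eq_or_ne i j with rfl | hij
    · rw [koszulWedge_mul_self, add_zero]
    · exact koszulWedge_anticomm R hij
  simp only [koszulDiff, Finset.sum_mul_sum, smul_mul_smul_comm, ← Finset.sum_product']
  refine Finset.sum_involution (fun p _ => p.swap) (fun p _ => ?_) (fun p _ hp hswap => hp ?_)
    (by simp) (by simp)
  · rw [Prod.fst_swap, Prod.snd_swap, mul_comm (x p.2), ← smul_add, anticomm, smul_zero]
  · rw [show p.2 = p.1 from congrArg Prod.fst hswap, koszulWedge_mul_self, smul_zero]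

theorem koszulDiff_koszulDiff (x : ι → R) (c : Finset ι → M) :
    koszulDiff x (koszulDiff x c) = 0 :=
  congrArg (· c) (koszulDiff_mul_self x)

theorem koszulDiff_comp {M' : Type*} [AddCommGroup M'] [Module R M'] (x : ι → R)
    (φ : M →ₗ[R] M') (c : Finset ι → M) : koszulDiff x (φ ∘ c) = φ ∘ koszulDiff x c := by
  ext T
  simp [koszulDiff_apply, koszulWedge_apply]

/-- Contraction with the linear form on `R^ι` that has coefficients `a`. -/
def koszulContraction (a : ι → R) : Module.End R (Finset ι → M) :=
  ∑ i, a i • koszulContract R i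

theorem koszulContraction_mul_koszulDiff_add (a x : ι → R) :
    koszulContraction a * koszulDiff x + koszulDiff x * koszulContraction a =
      (∑ i, a i * x i) • (1 : Module.End R (Finset ι → M)) := by
  have anticomm (i j : ι) : (koszulContract R i * koszulWedge R j : Module.End R (Finset ι → M)) +
      koszulWedge R j * koszulContract R i = if i = j then 1 else 0 := by
    split_ifs with hij
    · exact hij ▸ koszulContract_mul_koszulWedge_add R i
    · exact koszulContract_anticomm_koszulWedge R hij
  simp only [koszulContraction, koszulDiff, Finset.sum_mul_sum, smul_mul_smul_comm]
  rw [Finset.sum_comm (s := Finset.univ (α := ι)) (f := fun i j => (x i * a j) • _)]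
  simp only [← Finset.sum_add_distrib, mul_comm (x _), ← smul_add, anticomm, smul_ite, smul_zero,
    Finset.sum_ite_eq, Finset.mem_univ, if_true, ← Finset.sum_smul]

end KoszulOperators

section KoszulCohomology

variable {ι R M M' M'' : Type*} [CommRing R] [AddCommGroup M] [Module R M]
  [AddCommGroup M'] [Module R M'] [AddCommGroup M''] [Module R M'']

/-- The Koszul cochains all of whose components of degree at least `k` vanish. -/
def cochainsLT (R : Type*) {ι M : Type*} [CommRing R] [AddCommGroup M] [Module R M] (k : ℕ) :
    Submodule R (Finset ι → M) where
  carrier := {c | ∀ T, k ≤ #T → c T = 0}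
  zero_mem' _ _ := rfl
  add_mem' hc hc' T hT := by rw [Pi.add_apply, hc T hT, hc' T hT, add_zero]
  smul_mem' r c hc T hT := by rw [Pi.smul_apply, hc T hT, smul_zero]

theorem cochainsLT_mono {j k : ℕ} (hjk : j ≤ k) :
    (cochainsLT R j : Submodule R (Finset ι → M)) ≤ cochainsLT R k :=
  fun _ hc T hT => hc T (hjk.trans hT)

theorem comp_mem_cochainsLT {k : ℕ} (φ : M →ₗ[R] M') {c : Finset ι → M}
    (hc : c ∈ cochainsLT R k) : φ ∘ c ∈ cochainsLT R k := fun T hT => by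
  rw [Function.comp_apply, hc T hT, map_zero]

theorem exists_mem_cochainsLT_comp_eq {k : ℕ} {φ : M →ₗ[R] M'} {c : Finset ι → M'}
    (hc : c ∈ cochainsLT R k) (hφ : ∀ T, c T ∈ LinearMap.range φ) :
    ∃ b ∈ cochainsLT R k, φ ∘ b = c := by
  choose b hb using hφ
  refine ⟨fun T => if k ≤ #T then 0 else b T, fun T hT => if_pos hT, funext fun T => ?_⟩
  by_cases hT : k ≤ #T
  · simp [hT, hc T hT]
  · simp [hT, hb]

theorem mem_cochainsLT_of_mem_range {κ : Type*} {k : ℕ} {f : κ → Finset ι} (hf : ∀ i, #(f i) = k)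
    {c : Finset ι → M} (hc : ∀ T, c T ≠ 0 → T ∈ Set.range f) :
    c ∈ cochainsLT R (k + 1) := fun T hT => by
  by_contra hne
  obtain ⟨i, rfl⟩ := hc T hne
  exact absurd hT (by simp [hf i])

variable [LinearOrder ι]

theorem koszulContract_mem_cochainsLT {k : ℕ} (i : ι) {c : Finset ι → M}
    (hc : c ∈ cochainsLT R (k + 1)) : koszulContract R i c ∈ cochainsLT R k := fun T hT => by
  rw [koszulContract_apply]
  split_ifs with hi
  · rfl
  · rw [hc _ (by rw [Finset.card_insert_of_notMem hi]; omega), smul_zero]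

variable [Fintype ι] {x : ι → R}

theorem koszulContraction_mem_cochainsLT {k : ℕ} (a : ι → R) {c : Finset ι → M}
    (hc : c ∈ cochainsLT R (k + 1)) : koszulContraction a c ∈ cochainsLT R k := by
  rw [koszulContraction, LinearMap.sum_apply]
  exact sum_mem fun i _ => Submodule.smul_mem _ _ (koszulContract_mem_cochainsLT i hc)

theorem koszulDiff_congr {u u' : Finset ι → M} {T : Finset ι}
    (h : ∀ i ∈ T, u (T.erase i) = u' (T.erase i)) : koszulDiff x u T = koszulDiff x u' T := by
  simp only [koszulDiff_apply, koszulWedge_apply]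
  refine Finset.sum_congr rfl fun i _ => ?_
  split_ifs with hi
  · rw [h i hi]
  · rfl

theorem exists_ne_zero_of_koszulDiff_ne_zero {c : Finset ι → M} {T : Finset ι}
    (h : koszulDiff x c T ≠ 0) : ∃ i ∈ T, c (T.erase i) ≠ 0 := by
  by_contra! hc
  exact h (by rw [koszulDiff_congr (u' := 0) hc, map_zero, Pi.zero_apply])

theorem exists_eq_insert_of_koszulDiff_ne_zero {κ : Type*} {f : κ → Finset ι} {c : Finset ι → M}
    (hc : ∀ T, c T ≠ 0 → T ∈ Set.range f) {T : Finset ι} (hT : koszulDiff x c T ≠ 0) :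
    ∃ i, ∃ j ∉ f i, T = insert j (f i) := by
  obtain ⟨j, hj, hne⟩ := exists_ne_zero_of_koszulDiff_ne_zero hT
  obtain ⟨i, hi⟩ := hc _ hne
  exact ⟨i, j, hi ▸ Finset.notMem_erase j T, by rw [hi, Finset.insert_erase hj]⟩

theorem koszulDiff_one_ne_zero_of_notMem {c : Finset ι → M} (hc : c ≠ 0) {j : ι}
    (hj : ∀ T, c T ≠ 0 → j ∉ T) : koszulDiff (1 : ι → R) c ≠ 0 := by
  intro hdc
  have hcontract : koszulContraction (Pi.single j (1 : R)) c = 0 := by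
    ext T
    by_cases hjT : c (insert j T) = 0
    · simp [koszulContraction, Pi.single_apply, koszulContract_apply, hjT]
    · exact absurd (Finset.mem_insert_self j T) (hj _ hjT)
  have cartan := LinearMap.congr_fun
    (koszulContraction_mul_koszulDiff_add (M := M) (Pi.single j 1) (1 : ι → R)) c
  simp only [LinearMap.add_apply, Module.End.mul_apply, hdc, hcontract, map_zero,
    zero_add] at cartan
  exact hc (by simpa using cartan.symm)

theorem koszulDiff_mem_cochainsLT {k : ℕ} {c : Finset ι → M} (hc : c ∈ cochainsLT R k) :
    koszulDiff x c ∈ cochainsLT R (k + 1) := fun T hT => by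
  by_contra h
  obtain ⟨i, hi, hne⟩ := exists_ne_zero_of_koszulDiff_ne_zero h
  exact hne (hc _ (by rw [Finset.card_erase_of_mem hi]; omega))

theorem exists_mem_cochainsLT_koszulDiff_eq {k : ℕ} {u : Finset ι → M}
    (hu : koszulDiff x u ∈ cochainsLT R (k + 1)) :
    ∃ v ∈ cochainsLT R k, koszulDiff x v = koszulDiff x u := by
  let v : Finset ι → M := fun T => if k ≤ #T then 0 else u T
  have hv : v ∈ cochainsLT R k := fun T hT => if_pos hT
  refine ⟨v, hv, funext fun T => ?_⟩
  by_cases hT : k + 1 ≤ #T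
  · rw [hu T hT, koszulDiff_mem_cochainsLT hv T hT]
  · refine koszulDiff_congr fun i hi => if_neg ?_
    have := Finset.card_erase_lt_of_mem hi
    omega

theorem koszulDiff_apply_mem_mul {I J : Ideal R} (hx : ∀ i, x i ∈ I) {c : Finset ι → R}
    (hc : ∀ T, c T ∈ J) (T : Finset ι) : koszulDiff x c T ∈ I * J := by
  rw [koszulDiff_apply]
  refine sum_mem fun i _ => Ideal.mul_mem_mul (hx i) ?_
  rw [koszulWedge_apply]
  split_ifs
  · exact zsmul_mem (hc _) _
  · exact J.zero_mem

theorem koszulDiff_apply_mem {J : Ideal R} {c : Finset ι → R} (hc : ∀ T, c T ∈ J) (T : Finset ι) :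
    koszulDiff x c T ∈ J := by
  have h : koszulDiff x c T ∈ (⊤ : Ideal R) * J :=
    koszulDiff_apply_mem_mul (fun _ => Submodule.mem_top) hc T
  rwa [Ideal.top_mul] at h

/-- The Koszul cohomology of `M` with respect to the sequence `x` vanishes in degrees less than
`k`. Since the differential is homogeneous, it suffices to consider the cocycles concentrated in
these degrees, and the cochain of which they are the boundary need not be homogeneous. -/
def KoszulVanishesBelow (x : ι → R) (M : Type*) [AddCommGroup M] [Module R M] (k : ℕ) : Prop :=
  ∀ z ∈ cochainsLT R (M := M) k, koszulDiff x z = 0 → ∃ u, koszulDiff x u = z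

namespace KoszulVanishesBelow

variable {k : ℕ}

theorem mono {j : ℕ} (h : KoszulVanishesBelow x M k) (hjk : j ≤ k) : KoszulVanishesBelow x M j :=
  fun z hz => h z (cochainsLT_mono hjk hz)

theorem of_linearEquiv (e : M ≃ₗ[R] M') (h : KoszulVanishesBelow x M k) :
    KoszulVanishesBelow x M' k := by
  intro z hz hdz
  obtain ⟨u, hu⟩ := h (e.symm.toLinearMap ∘ z) (comp_mem_cochainsLT _ hz) (by
    rw [koszulDiff_comp, hdz]; ext; simp)
  exact ⟨e.toLinearMap ∘ u, by rw [koszulDiff_comp, hu]; ext; simp⟩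

theorem exists_mem_cochainsLT (h : KoszulVanishesBelow x M (k + 1)) {z : Finset ι → M}
    (hz : z ∈ cochainsLT R (k + 1)) (hdz : koszulDiff x z = 0) :
    ∃ u ∈ cochainsLT R k, koszulDiff x u = z := by
  obtain ⟨u, rfl⟩ := h z hz hdz
  exact exists_mem_cochainsLT_koszulDiff_eq hz

theorem of_exact {f : M' →ₗ[R] M} {g : M →ₗ[R] M''} (hf : Function.Injective f)
    (hfg : Function.Exact f g) (hg : Function.Surjective g)
    (h' : KoszulVanishesBelow x M' (k + 1)) (h : KoszulVanishesBelow x M k) :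
    KoszulVanishesBelow x M'' k := by
  intro z hz hdz
  obtain ⟨w, hw, rfl⟩ := exists_mem_cochainsLT_comp_eq hz fun T => hg (z T)
  obtain ⟨y, hy, hyw⟩ : ∃ y ∈ cochainsLT R (k + 1), f ∘ y = koszulDiff x w := by
    refine exists_mem_cochainsLT_comp_eq (koszulDiff_mem_cochainsLT hw) fun T => (hfg _).1 ?_
    rw [koszulDiff_comp] at hdz
    exact congrFun hdz T
  have hdy : koszulDiff x y = 0 := by
    have hfdy : f ∘ koszulDiff x y = 0 := by
      rw [← koszulDiff_comp, hyw, koszulDiff_koszulDiff]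
    exact funext fun T => hf (by simpa using congrFun hfdy T)
  obtain ⟨u, hu, rfl⟩ := h'.exists_mem_cochainsLT hy hdy
  obtain ⟨v, hv⟩ := h (w - f ∘ u) (sub_mem hw (comp_mem_cochainsLT f hu)) (by
    rw [map_sub, koszulDiff_comp, hyw, sub_self])
  refine ⟨g ∘ v, ?_⟩
  rw [koszulDiff_comp, hv]
  ext T
  simp [hfg.apply_apply_eq_zero]

/-- Contraction with a linear form taking the value `1` on `x` is a contracting homotopy. -/
theorem of_smul_eq_zero {r : R} (hr : r - 1 ∈ Ideal.span (Set.range x)) (hrM : ∀ m : M, r • m = 0) :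
    KoszulVanishesBelow x M k := by
  intro z _ hdz
  obtain ⟨a, ha⟩ := Ideal.mem_span_range_iff_exists_fun.1 hr
  refine ⟨-koszulContraction a z, ?_⟩
  have cartan := LinearMap.congr_fun (koszulContraction_mul_koszulDiff_add (M := M) a x) z
  simp only [LinearMap.add_apply, Module.End.mul_apply, hdz, map_zero, zero_add, ha] at cartan
  rw [map_neg, cartan]
  ext T
  simp [sub_smul, hrM]

theorem quotSMulTop {r : R} (hr : IsSMulRegular M r) (h : KoszulVanishesBelow x M (k + 1)) :
    KoszulVanishesBelow x (QuotSMulTop r M) k :=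
  of_exact (f := LinearMap.lsmul R M r) hr
    (fun m => by
      simp [Submodule.mem_smul_pointwise_iff_exists])
    (Submodule.mkQ_surjective (r • (⊤ : Submodule R M))) h (h.mono k.le_succ)

theorem of_quotSMulTop {r : R} (hrx : r ∈ Ideal.span (Set.range x)) (hr : IsSMulRegular M r)
    (h : KoszulVanishesBelow x (QuotSMulTop r M) k) : KoszulVanishesBelow x M (k + 1) := by
  intro z hz hdz
  obtain ⟨a, ha⟩ := Ideal.mem_span_range_iff_exists_fun.1 hrx
  let π := (r • (⊤ : Submodule R M)).mkQ
  have hdw : koszulDiff x (koszulContraction a z) = r • z := by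
    have cartan := LinearMap.congr_fun (koszulContraction_mul_koszulDiff_add (M := M) a x) z
    simpa [hdz, ha] using cartan
  obtain ⟨u', hu'⟩ := h (π ∘ koszulContraction a z)
    (comp_mem_cochainsLT π (koszulContraction_mem_cochainsLT a hz)) (by
      rw [koszulDiff_comp, hdw]
      exact funext fun T => (Submodule.Quotient.mk_eq_zero _).2
        (Submodule.smul_mem_pointwise_smul (z T) r ⊤ trivial))
  obtain ⟨u, rfl⟩ := (Submodule.mkQ_surjective (r • (⊤ : Submodule R M))).comp_left u'
  have hdvd (T : Finset ι) : ∃ m, r • m = (koszulContraction a z - koszulDiff x u) T := by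
    have hmem : (koszulContraction a z - koszulDiff x u) T ∈ r • (⊤ : Submodule R M) := by
      rw [koszulDiff_comp] at hu'
      rw [← Submodule.Quotient.mk_eq_zero, Pi.sub_apply, Submodule.Quotient.mk_sub, sub_eq_zero]
      exact (congrFun hu' T).symm
    obtain ⟨m, -, hm⟩ := (Submodule.mem_smul_pointwise_iff_exists _ _ _).1 hmem
    exact ⟨m, hm⟩
  choose v hv using hdvd
  have hrdv : r • koszulDiff x v = r • z := calc
    r • koszulDiff x v = koszulDiff x (r • v) := (map_smul (koszulDiff x) r v).symm
    _ = koszulDiff x (koszulContraction a z - koszulDiff x u) := by rw [← funext hv]; rfl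
    _ = r • z := by rw [map_sub, koszulDiff_koszulDiff, sub_zero, hdw]
  exact ⟨v, funext fun T => hr (congrFun hrdv T)⟩

end KoszulVanishesBelow

theorem top_ne_smul_top_of_not_koszulVanishesBelow [Module.Finite R M] {k : ℕ}
    (h : ¬KoszulVanishesBelow x M k) :
    (⊤ : Submodule R M) ≠ Ideal.span (Set.range x) • ⊤ := by
  intro htop
  obtain ⟨r, hr, hrM⟩ := Submodule.exists_sub_one_mem_and_smul_eq_zero_of_fg_of_le_smul
    (Ideal.span (Set.range x)) (⊤ : Submodule R M) Module.Finite.fg_top htop.le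
  exact h (.of_smul_eq_zero hr fun m => hrM m trivial)

theorem koszulVanishesBelow_of_isWeaklyRegular {rs : List R}
    (hrs : ∀ r ∈ rs, r ∈ Ideal.span (Set.range x))
    (hreg : RingTheory.Sequence.IsWeaklyRegular M rs) : KoszulVanishesBelow x M rs.length := by
  induction rs generalizing M with
  | nil =>
    intro z hz _
    rw [funext fun T => hz T (Nat.zero_le _)]
    exact ⟨0, map_zero _⟩
  | cons r rs ih =>
    rw [RingTheory.Sequence.isWeaklyRegular_cons_iff] at hreg
    rw [List.forall_mem_cons] at hrs
    exact .of_quotSMulTop hrs.1 hreg.1 (ih hrs.2 hreg.2)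

theorem KoszulVanishesBelow.eq_zero_of_smul_eq_zero {m : M} (h : KoszulVanishesBelow x M 1)
    (hm : ∀ i, x i • m = 0) : m = 0 := by
  obtain ⟨u, hu⟩ := h (Pi.single ∅ m)
    (fun T hT => Pi.single_eq_of_ne (M := fun _ => M) (Finset.card_pos.1 hT).ne_empty m) (by
      ext T
      rw [koszulDiff_apply]
      refine Finset.sum_eq_zero fun i _ => ?_
      rw [koszulWedge_apply]
      split_ifs
      · rw [smul_comm, Pi.single_apply]
        split_ifs <;> simp [hm]
      · exact smul_zero _)
  simpa [koszulDiff_apply, koszulWedge_apply] using (congrFun hu ∅).symm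

variable [IsNoetherianRing R] [Module.Finite R M]

theorem KoszulVanishesBelow.exists_isSMulRegular (h : KoszulVanishesBelow x M 1) :
    ∃ r ∈ Ideal.span (Set.range x), IsSMulRegular M r := by
  have hom_eq_zero (φ : (R ⧸ Ideal.span (Set.range x)) →ₗ[R] M) : φ = 0 := by
    refine Submodule.linearMap_qext _ (LinearMap.ext_ring (h.eq_zero_of_smul_eq_zero fun i => ?_))
    rw [← map_smul, smul_eq_mul, mul_one, LinearMap.comp_apply, Submodule.mkQ_apply,
      (Submodule.Quotient.mk_eq_zero _).2 (Ideal.subset_span (Set.mem_range_self i)), map_zero]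
  have := IsSMulRegular.subsingleton_linearMap_iff.1
    (⟨fun φ ψ => (hom_eq_zero φ).trans (hom_eq_zero ψ).symm⟩ :
      Subsingleton ((R ⧸ Ideal.span (Set.range x)) →ₗ[R] M))
  rwa [Ideal.annihilator_quotient] at this

theorem KoszulVanishesBelow.exists_isWeaklyRegular {k : ℕ} (h : KoszulVanishesBelow x M k) :
    ∃ rs : List R, rs.length = k ∧ (∀ r ∈ rs, r ∈ Ideal.span (Set.range x)) ∧
      RingTheory.Sequence.IsWeaklyRegular M rs := by
  induction k generalizing M with
  | zero => exact ⟨[], rfl, by simp, .nil R M⟩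
  | succ k ih =>
    obtain ⟨r, hrx, hr⟩ := (h.mono (Nat.le_add_left 1 k)).exists_isSMulRegular
    obtain ⟨rs, hlength, hrs, hreg⟩ := ih (h.quotSMulTop hr)
    exact ⟨r :: rs, by simp [hlength], List.forall_mem_cons.2 ⟨hrx, hrs⟩, .cons hr hreg⟩

theorem moduleDepth_eq_of_koszulVanishesBelow {R M : Type} [CommRing R] [IsNoetherianRing R]
    [AddCommGroup M] [Module R M] [Module.Finite R M] {x : ι → R} {k : ℕ}
    (h : KoszulVanishesBelow x M k) (hsucc : ¬KoszulVanishesBelow x M (k + 1)) :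
    moduleDepth (Ideal.span (Set.range x)) M = k := by
  apply le_antisymm
  · refine sSup_le ?_
    rintro _ ⟨rs, rfl, hrs, hreg⟩
    by_contra! hlt
    exact hsucc ((koszulVanishesBelow_of_isWeaklyRegular hrs hreg.toIsWeaklyRegular).mono
      (by exact_mod_cast Order.add_one_le_of_lt hlt))
  · obtain ⟨rs, rfl, hrs, hreg⟩ := h.exists_isWeaklyRegular
    refine le_sSup ⟨rs, rfl, hrs, hreg, fun htop =>
      top_ne_smul_top_of_not_koszulVanishesBelow hsucc ?_⟩
    exact top_le_iff.1 (htop.le.trans (Submodule.smul_mono_left (Ideal.span_le.2 hrs))) |>.symm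

end KoszulCohomology

section DivXSq

variable {σ R : Type*} [CommRing R]

/-- The additive map sending a monomial divisible by `X i ^ 2` to its quotient by `X i` and
killing all other monomials. Unlike division by `X i`, it does not change the set of variables
that occur in a monomial. -/
noncomputable def divXSq (i : σ) : MvPolynomial σ R →+ MvPolynomial σ R where
  toFun y := X i * y.divMonomial (Finsupp.single i 2)
  map_zero' := by rw [zero_divMonomial, mul_zero]
  map_add' y y' := by rw [add_divMonomial, mul_add]

theorem divXSq_apply (i : σ) (y : MvPolynomial σ R) :
    divXSq i y = X i * y.divMonomial (Finsupp.single i 2) :=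
  rfl

theorem X_mul_divXSq (i : σ) (y : MvPolynomial σ R) :
    X i * divXSq i y = y - y.modMonomial (Finsupp.single i 2) := by
  have h := divMonomial_add_modMonomial y (Finsupp.single i 2)
  rw [← X_pow_eq_monomial] at h
  linear_combination h + X i * divXSq_apply i y

theorem divXSq_X_mul (i : σ) (y : MvPolynomial σ R) :
    divXSq i (X i * y) = y - y.modMonomial (Finsupp.single i 1) := by
  rw [divXSq_apply, show Finsupp.single i 2 = Finsupp.single i 1 + Finsupp.single i 1 from
    Finsupp.single_add i 1 1, divMonomial_add, X_mul_divMonomial, eq_sub_iff_add_eq,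
    divMonomial_add_modMonomial_single]

theorem divXSq_X_mul_of_ne {i j : σ} (hij : j ≠ i) (y : MvPolynomial σ R) :
    divXSq i (X j * y) = X j * divXSq i y := by
  suffices (X j * y).divMonomial (Finsupp.single i 2) = X j * y.divMonomial (Finsupp.single i 2) by
    rw [divXSq_apply, divXSq_apply, this, mul_left_comm]
  classical
  ext b
  have hb : (Finsupp.single i 2 + b : σ →₀ ℕ) j = b j := by simp [hij.symm]
  simp only [coeff_divMonomial, coeff_X_mul', Finsupp.mem_support_iff, hb]
  split_ifs with hbj
  · rw [add_tsub_assoc_of_le (Finsupp.single_le_iff.2 (Nat.one_le_iff_ne_zero.2 hbj))]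
  · rfl

theorem exists_mem_support_of_mem_support_divXSq {i : σ} {y : MvPolynomial σ R} {b' : σ →₀ ℕ}
    (hb' : b' ∈ (divXSq i y).support) : ∃ b ∈ y.support, b.support = b'.support := by
  classical
  rw [mem_support_iff, divXSq_apply, coeff_X_mul', ite_ne_right_iff, coeff_divMonomial,
    Finsupp.mem_support_iff] at hb'
  refine ⟨_, mem_support_iff.2 hb'.2, Finset.ext fun j => ?_⟩
  rcases eq_or_ne i j with rfl | hij
  · simp [hb'.1]
  · simp [hij.symm]

theorem mem_support_of_mem_support_modMonomial {y : MvPolynomial σ R} {s b : σ →₀ ℕ}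
    (hb : b ∈ (y.modMonomial s).support) : b ∈ y.support ∧ ¬s ≤ b := by
  have hsb : ¬s ≤ b := fun h => mem_support_iff.1 hb (coeff_modMonomial_of_le y h)
  rw [mem_support_iff, coeff_modMonomial_of_not_le y hsb] at hb
  exact ⟨mem_support_iff.2 hb, hsb⟩

variable [LinearOrder σ]

/-- The part of a cochain consisting of the monomials `X^b e_T` with `b i < 2` if `i ∈ T` and
`b i < 1` otherwise. -/
noncomputable def reduceExponent (i : σ) (c : Finset σ → MvPolynomial σ R) (T : Finset σ) :
    MvPolynomial σ R :=
  (c T).modMonomial (Finsupp.single i <| if i ∈ T then 2 else 1)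

/-- A homotopy, on the Koszul complex of the variables, from the identity to `reduceExponent i`. -/
noncomputable def koszulHomotopy (i : σ) (c : Finset σ → MvPolynomial σ R) :
    Finset σ → MvPolynomial σ R :=
  divXSq i ∘ koszulContract (MvPolynomial σ R) i c

theorem koszulDiff_koszulHomotopy_add [Fintype σ] (i : σ) (c : Finset σ → MvPolynomial σ R) :
    koszulDiff (X (R := R)) (koszulHomotopy i c) + koszulHomotopy i (koszulDiff (X (R := R)) c) =
      c - reduceExponent i c := by
  let w (j : σ) : Module.End (MvPolynomial σ R) (Finset σ → MvPolynomial σ R) := koszulWedge _ j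
  let ct : Module.End (MvPolynomial σ R) (Finset σ → MvPolynomial σ R) := koszulContract _ i
  ext1 T
  have hdh : koszulDiff (X (R := R)) (koszulHomotopy i c) T =
      ∑ j, X j * divXSq i (w j (ct c) T) := by
    simp only [koszulHomotopy, koszulDiff_apply, koszulWedge_apply, w, ct, smul_eq_mul,
      Function.comp_apply, apply_ite (divXSq i), map_zsmul, map_zero]
  have hhd : koszulHomotopy i (koszulDiff (X (R := R)) c) T =
      ∑ j, divXSq i (X j * ct (w j c) T) := by
    simp only [koszulHomotopy, Function.comp_apply, koszulDiff, LinearMap.sum_apply,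
      LinearMap.smul_apply, map_sum, map_smul, Finset.sum_apply, Pi.smul_apply, smul_eq_mul, w, ct]
  rw [Pi.add_apply, hdh, hhd, ← Finset.sum_add_distrib,
    Finset.sum_eq_single i]
  · by_cases hi : i ∈ T
    · simp [-zsmul_eq_mul, w, ct, koszulWedge_apply, koszulContract_apply, hi, smul_smul,
        koszulSign_erase, koszulSign_mul_self, X_mul_divXSq, reduceExponent]
    · simp [-zsmul_eq_mul, w, ct, koszulWedge_apply, koszulContract_apply, hi, smul_smul,
        koszulSign_insert, koszulSign_mul_self, divXSq_X_mul, reduceExponent]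
  · intro j _ hji
    have anticomm : w j (ct c) T + ct (w j c) T = 0 := by
      rw [add_comm]
      exact congrFun (LinearMap.congr_fun (koszulContract_anticomm_koszulWedge _ hji.symm) c) T
    rw [divXSq_X_mul_of_ne hji, ← mul_add, ← map_add, anticomm, map_zero, mul_zero]
  · simp

end DivXSq

section SqMonIdeal

variable {K : Type} [Field K] {n : ℕ}

theorem sqMon_eq_monomial (T : Finset (Fin n)) :
    sqMon K T = monomial (∑ i ∈ T, Finsupp.single i 1) 1 := by
  rw [monomial_sum_one]
  rfl

theorem sqMon_dvd_sqMon {T T' : Finset (Fin n)} (h : T ⊆ T') : sqMon K T ∣ sqMon K T' :=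
  Finset.prod_dvd_prod_of_subset T T' X h

theorem sum_single_le_iff {T : Finset (Fin n)} {b : Fin n →₀ ℕ} :
    ∑ i ∈ T, Finsupp.single i 1 ≤ b ↔ T ⊆ b.support := by
  simp only [Finsupp.le_def, Finsupp.finsetSum_apply, Finsupp.single_apply, Finset.sum_ite_eq',
    Finset.subset_iff, Finsupp.mem_support_iff]
  refine forall_congr' fun i => ?_
  split_ifs with hi <;> simp [hi, Nat.one_le_iff_ne_zero]

theorem sqMon_support_dvd_monomial (b : Fin n →₀ ℕ) (a : K) :
    sqMon K b.support ∣ monomial b a := by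
  rw [sqMon_eq_monomial, monomial_dvd_monomial]
  exact ⟨Or.inr (sum_single_le_iff.2 subset_rfl), one_dvd a⟩

/-- Square-free monomial ideals: those containing the radical of every monomial which occurs in
one of their elements. -/
def IsSqMonIdeal (A : Ideal (MvPolynomial (Fin n) K)) : Prop :=
  ∀ y ∈ A, ∀ b ∈ y.support, sqMon K b.support ∈ A

theorem mem_of_sqMon_support_mem {A : Ideal (MvPolynomial (Fin n) K)} {y : MvPolynomial (Fin n) K}
    (hy : ∀ b ∈ y.support, sqMon K b.support ∈ A) : y ∈ A := by
  rw [y.as_sum]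
  exact sum_mem fun b hb => A.mem_of_dvd (sqMon_support_dvd_monomial b _) (hy b hb)

theorem isSqMonIdeal_span (G : Set (Finset (Fin n))) :
    IsSqMonIdeal (Ideal.span (sqMon K '' G)) := by
  intro y hy b hb
  have himage : sqMon K '' G =
      (fun s => monomial s 1) '' ((fun T => ∑ i ∈ T, Finsupp.single i 1) '' G) := by
    rw [Set.image_image]
    exact Set.image_congr fun T _ => sqMon_eq_monomial T
  rw [himage, mem_ideal_span_monomial_image] at hy
  obtain ⟨_, ⟨T, hT, rfl⟩, hTb⟩ := hy b hb
  exact Ideal.mem_of_dvd _ (sqMon_dvd_sqMon (sum_single_le_iff.1 hTb))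
    (Ideal.subset_span (Set.mem_image_of_mem _ hT))

theorem isSqMonIdeal_bot : IsSqMonIdeal (⊥ : Ideal (MvPolynomial (Fin n) K)) := by
  intro y hy b hb
  simp [(Submodule.mem_bot _).1 hy] at hb

theorem GenBySqMonOfDeg.isSqMonIdeal {P : ℕ → Prop} {A : Ideal (MvPolynomial (Fin n) K)}
    (hA : GenBySqMonOfDeg K P A) : IsSqMonIdeal A := by
  obtain ⟨G, -, rfl⟩ := hA
  exact isSqMonIdeal_span G

namespace IsSqMonIdeal

variable {A B : Ideal (MvPolynomial (Fin n) K)}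

theorem mem_of_support (hA : IsSqMonIdeal A) {y y' : MvPolynomial (Fin n) K} (hy : y ∈ A)
    (h : ∀ b' ∈ y'.support, ∃ b ∈ y.support, b.support = b'.support) : y' ∈ A :=
  mem_of_sqMon_support_mem fun b' hb' => by
    obtain ⟨b, hb, hbb'⟩ := h b' hb'
    exact hbb' ▸ hA y hy b hb

theorem sup (hA : IsSqMonIdeal A) (hB : IsSqMonIdeal B) : IsSqMonIdeal (A ⊔ B) := by
  classical
  intro y hy b hb
  obtain ⟨y₁, hy₁, y₂, hy₂, rfl⟩ := Submodule.mem_sup.1 hy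
  rcases Finset.mem_union.1 (support_add hb) with hb | hb
  · exact Ideal.mem_sup_left (hA y₁ hy₁ b hb)
  · exact Ideal.mem_sup_right (hB y₂ hy₂ b hb)

theorem koszulHomotopy_mem (hA : IsSqMonIdeal A) {c : Finset (Fin n) → MvPolynomial (Fin n) K}
    (hc : ∀ T, c T ∈ A) (i : Fin n) (T : Finset (Fin n)) : koszulHomotopy i c T ∈ A := by
  refine hA.mem_of_support (y := koszulContract _ i c T) ?_
    fun _ => exists_mem_support_of_mem_support_divXSq
  rw [koszulContract_apply]
  split_ifs
  · exact A.zero_mem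
  · exact zsmul_mem (hc _) _

theorem reduceExponent_mem (hA : IsSqMonIdeal A) {c : Finset (Fin n) → MvPolynomial (Fin n) K}
    (hc : ∀ T, c T ∈ A) (i : Fin n) (T : Finset (Fin n)) : reduceExponent i c T ∈ A :=
  hA.mem_of_support (hc T) fun b hb => ⟨b, (mem_support_of_mem_support_modMonomial hb).1, rfl⟩

end IsSqMonIdeal

theorem eq_zero_of_exponent_le {A : Ideal (MvPolynomial (Fin n) K)} {k : ℕ}
    (hAk : A ≤ idealOfVars (Fin n) K ^ k) {c : Finset (Fin n) → MvPolynomial (Fin n) K}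
    (hc : c ∈ cochainsLT (MvPolynomial (Fin n) K) k) (hcA : ∀ T, c T ∈ A)
    (hcT : ∀ T, ∀ b ∈ (c T).support, ∀ i, b i < if i ∈ T then 2 else 1) : c = 0 := by
  ext1 T
  rw [Pi.zero_apply, ← support_eq_empty, Finset.eq_empty_iff_forall_notMem]
  intro b hb
  have hkb : k ≤ b.degree := (mem_pow_idealOfVars_iff k _).1 (hAk (hcA T)) b hb
  have hbT : b.degree ≤ #T := by
    rw [Finsupp.degree_eq_sum, Finset.card_eq_sum_ones, ← Finset.sum_subset T.subset_univ]
    · exact Finset.sum_le_sum fun i hi => by simpa [hi, Nat.lt_succ_iff] using hcT T b hb i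
    · exact fun i _ hi => by simpa [hi] using hcT T b hb i
  simp [hc T (hkb.trans hbT)] at hb

/-- The induction on `t` removes the excess exponents one variable after another. -/
theorem exists_forall_sub_koszulDiff_mem_of_exponent_le {A B : Ideal (MvPolynomial (Fin n) K)}
    (hA : IsSqMonIdeal A) (hB : IsSqMonIdeal B) {k : ℕ} (hAk : A ≤ idealOfVars (Fin n) K ^ k)
    (t : Finset (Fin n)) (c : Finset (Fin n) → MvPolynomial (Fin n) K)
    (hc : c ∈ cochainsLT (MvPolynomial (Fin n) K) k) (hcA : ∀ T, c T ∈ A)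
    (hdc : ∀ T, koszulDiff (X (R := K)) c T ∈ B)
    (hct : ∀ T, ∀ b ∈ (c T).support, ∀ i ∉ t, b i < if i ∈ T then 2 else 1) :
    ∃ u : Finset (Fin n) → MvPolynomial (Fin n) K,
      (∀ T, u T ∈ A) ∧ ∀ T, (c - koszulDiff (X (R := K)) u) T ∈ B := by
  induction t using Finset.induction_on generalizing c with
  | empty =>
    have hc0 : c = 0 :=
      eq_zero_of_exponent_le hAk hc hcA fun T b hb i => hct T b hb i (Finset.notMem_empty i)
    exact ⟨0, fun _ => A.zero_mem, fun T => by simp [hc0]⟩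
  | insert i t _ ih =>
    have hsplit := koszulDiff_koszulHomotopy_add i c
    have hhdc := hB.koszulHomotopy_mem hdc i
    obtain ⟨u, huA, hu⟩ := ih (reduceExponent i c)
      (fun T hT => by
        rw [reduceExponent, hc T hT]
        exact monomial_one_dvd_iff_modMonomial_eq_zero.1 (dvd_zero _))
      (hA.reduceExponent_mem hcA i)
      (fun T => by
        rw [← sub_sub_cancel c (reduceExponent i c), ← hsplit, map_sub, map_add,
          koszulDiff_koszulDiff, zero_add]
        exact sub_mem (hdc T) (koszulDiff_apply_mem hhdc T))
      (fun T b hb j hj => by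
        obtain ⟨hbc, hbi⟩ := mem_support_of_mem_support_modMonomial hb
        rcases eq_or_ne j i with rfl | hji
        · simpa using hbi
        · exact hct T b hbc j (by simp [hji, hj]))
    refine ⟨koszulHomotopy i c + u,
      fun T => add_mem (hA.koszulHomotopy_mem hcA i T) (huA T), fun T => ?_⟩
    have hrest : c - koszulDiff (X (R := K)) (koszulHomotopy i c + u) =
        (reduceExponent i c - koszulDiff (X (R := K)) u) +
          koszulHomotopy i (koszulDiff (X (R := K)) c) := by
      rw [map_add, eq_sub_of_add_eq hsplit]
      abel
    rw [hrest]
    exact add_mem (hu T) (hhdc T)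

end SqMonIdeal

section Vanishing

variable {K : Type} [Field K] {n : ℕ} {A B I : Ideal (MvPolynomial (Fin n) K)} {k : ℕ}

theorem koszulVanishesBelow_idealQuot (hA : IsSqMonIdeal A) (hB : IsSqMonIdeal B)
    (hAk : A ≤ idealOfVars (Fin n) K ^ k) :
    KoszulVanishesBelow (X (σ := Fin n) (R := K)) (idealQuot A B) k := by
  intro z hz hdz
  let π := (Submodule.comap A.subtype B).mkQ
  obtain ⟨c, hc, rfl⟩ := exists_mem_cochainsLT_comp_eq hz fun T =>
    LinearMap.mem_range.2 (Submodule.mkQ_surjective (Submodule.comap A.subtype B) (z T))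
  have hdc (T : Finset (Fin n)) : koszulDiff (X (R := K)) (A.subtype ∘ c) T ∈ B := by
    rw [koszulDiff_comp] at hdz ⊢
    exact (Submodule.Quotient.mk_eq_zero (Submodule.comap A.subtype B)).1 (congrFun hdz T)
  obtain ⟨u, huA, hu⟩ := exists_forall_sub_koszulDiff_mem_of_exponent_le hA hB hAk Finset.univ
    (A.subtype ∘ c) (comp_mem_cochainsLT A.subtype hc) (fun T => (c T).2) hdc
    (fun _ _ _ i hi => absurd (Finset.mem_univ i) hi)
  let v (T : Finset (Fin n)) : A := ⟨u T, huA T⟩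
  refine ⟨π ∘ v, funext fun T => ?_⟩
  have hdv : koszulDiff (X (R := K)) u = A.subtype ∘ koszulDiff (X (R := K)) v :=
    koszulDiff_comp _ A.subtype v
  rw [koszulDiff_comp]
  refine ((Submodule.Quotient.eq (Submodule.comap A.subtype B)).2 ?_).symm
  simpa [hdv] using hu T

theorem koszulVanishesBelow_ideal (hA : IsSqMonIdeal A) (hAk : A ≤ idealOfVars (Fin n) K ^ k) :
    KoszulVanishesBelow (X (σ := Fin n) (R := K)) A k :=
  .of_linearEquiv (Submodule.quotEquivOfEqBot _ <| by
    rw [Submodule.comap_bot, Submodule.ker_subtype])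
    (koszulVanishesBelow_idealQuot hA isSqMonIdeal_bot hAk)

theorem sqMon_ne_zero (T : Finset (Fin n)) : sqMon K T ≠ 0 :=
  Finset.prod_ne_zero_iff.2 fun i _ => X_ne_zero i

theorem C_mul_sqMon_mem_pow_idealOfVars_iff {a : K} (ha : a ≠ 0) {T : Finset (Fin n)} :
    C a * sqMon K T ∈ idealOfVars (Fin n) K ^ k ↔ k ≤ #T := by
  rw [sqMon_eq_monomial, C_mul_monomial, mul_one, monomial_mem_pow_idealOfVars_iff k _ ha, map_sum]
  simp

theorem span_sqMon_le_pow_idealOfVars {G : Set (Finset (Fin n))} (hG : ∀ T ∈ G, k ≤ #T) :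
    Ideal.span (sqMon K '' G) ≤ idealOfVars (Fin n) K ^ k := by
  rw [Ideal.span_le]
  rintro _ ⟨T, hT, rfl⟩
  simpa using (C_mul_sqMon_mem_pow_idealOfVars_iff (one_ne_zero (α := K))).2 (hG T hT)

theorem GenBySqMonOfDeg.le_pow_idealOfVars (hI : GenBySqMonOfDeg K (fun j => k ≤ j) I) :
    I ≤ idealOfVars (Fin n) K ^ k := by
  obtain ⟨G, hG, rfl⟩ := hI
  exact span_sqMon_le_pow_idealOfVars hG

theorem koszulVanishesBelow_mvPolynomial :
    KoszulVanishesBelow (X (σ := Fin n) (R := K)) (MvPolynomial (Fin n) K) n := by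
  have hle : Ideal.span {sqMon K Finset.univ} ≤ idealOfVars (Fin n) K ^ n := by
    simpa using span_sqMon_le_pow_idealOfVars (K := K) (G := {Finset.univ}) (k := n) (by simp)
  exact .of_linearEquiv
    (LinearEquiv.toSpanNonzeroSingleton _ _ (sqMon K Finset.univ) (sqMon_ne_zero _)).symm
    (koszulVanishesBelow_ideal (by simpa using isSqMonIdeal_span (K := K) {Finset.univ}) hle)

theorem koszulVanishesBelow_quotient (hI : IsSqMonIdeal I)
    (hIk : I ≤ idealOfVars (Fin n) K ^ (k + 1)) (hk : k ≤ n) :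
    KoszulVanishesBelow (X (σ := Fin n) (R := K)) (MvPolynomial (Fin n) K ⧸ I) k :=
  .of_exact I.injective_subtype (LinearMap.exact_subtype_mkQ I) I.mkQ_surjective
    (koszulVanishesBelow_ideal hI hIk) (koszulVanishesBelow_mvPolynomial.mono hk)

variable {m : ℕ} {φ : Fin m → Fin n}

theorem rename_sqMon (hφ : Function.Injective φ) (T : Finset (Fin m)) :
    rename φ (sqMon K T) = sqMon K (T.image φ) := by
  simp only [sqMon, map_prod, rename_X, Finset.prod_image hφ.injOn]

theorem mapDomain_mem_support_rename (hφ : Function.Injective φ) {y : MvPolynomial (Fin m) K}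
    {b : Fin m →₀ ℕ} (hb : b ∈ y.support) : b.mapDomain φ ∈ (rename φ y).support := by
  rw [support_rename_of_injective hφ]
  exact Finset.mem_image_of_mem _ hb

theorem IsSqMonIdeal.comap_rename (hφ : Function.Injective φ) (hI : IsSqMonIdeal I) :
    IsSqMonIdeal (I.comap (rename φ)) := by
  intro y hy b hb
  rw [Ideal.mem_comap, rename_sqMon hφ, ← Finsupp.mapDomain_support_of_injective hφ]
  exact hI _ hy _ (mapDomain_mem_support_rename hφ hb)

theorem comap_rename_le_pow_idealOfVars (hφ : Function.Injective φ)
    (hIk : I ≤ idealOfVars (Fin n) K ^ k) :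
    I.comap (rename φ) ≤ idealOfVars (Fin m) K ^ k := fun y hy => by
  refine (mem_pow_idealOfVars_iff k y).2 fun b hb => ?_
  rw [← Finsupp.degree_mapDomain φ]
  exact (mem_pow_idealOfVars_iff k _).1 (hIk hy) _ (mapDomain_mem_support_rename hφ hb)

end Vanishing

section Nonvanishing

variable {K : Type} [Field K] {n : ℕ} {A B I : Ideal (MvPolynomial (Fin n) K)} {k : ℕ}

/-- The Koszul cochain `∑ T, α T • x^T e_T` of square-free multidegrees defined by a scalar
cochain `α`. -/
noncomputable def sqMonCochain (α : Finset (Fin n) → K) (T : Finset (Fin n)) :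
    MvPolynomial (Fin n) K :=
  C (α T) * sqMon K T

theorem koszulDiff_sqMonCochain (α : Finset (Fin n) → K) :
    koszulDiff (X (R := K)) (sqMonCochain α) = sqMonCochain (koszulDiff (1 : Fin n → K) α) := by
  ext1 T
  simp only [sqMonCochain, koszulDiff_apply, koszulWedge_apply, map_sum, Finset.sum_mul]
  refine Finset.sum_congr rfl fun i _ => ?_
  split_ifs with hi
  · rw [sqMon, sqMon, ← Finset.mul_prod_erase T X hi]
    simp only [smul_eq_mul, Pi.one_apply, one_mul, map_zsmul, smul_mul_assoc, mul_smul_comm]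
    rw [mul_left_comm]
  · simp

theorem sqMonCochain_mem_cochainsLT {α : Finset (Fin n) → K} (hα : α ∈ cochainsLT K k) :
    sqMonCochain α ∈ cochainsLT (MvPolynomial (Fin n) K) k := fun T hT => by
  rw [sqMonCochain, hα T hT, map_zero, zero_mul]

theorem sqMonCochain_mem {α : Finset (Fin n) → K} (hα : ∀ T, α T ≠ 0 → sqMon K T ∈ A)
    (T : Finset (Fin n)) : sqMonCochain α T ∈ A := by
  rcases eq_or_ne (α T) 0 with hT | hT
  · simp [sqMonCochain, hT]
  · exact A.mul_mem_left _ (hα T hT)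

theorem eq_zero_of_sqMonCochain_mem_pow_idealOfVars {α : Finset (Fin n) → K}
    (hα : α ∈ cochainsLT K k) (h : ∀ T, sqMonCochain α T ∈ idealOfVars (Fin n) K ^ k) : α = 0 := by
  by_contra hne
  obtain ⟨T, hT⟩ := Function.ne_iff.1 hne
  exact hT (hα T ((C_mul_sqMon_mem_pow_idealOfVars_iff hT).1 (h T)))

theorem koszulDiff_mem_pow_succ_idealOfVars {c : Finset (Fin n) → MvPolynomial (Fin n) K}
    (hc : ∀ T, c T ∈ idealOfVars (Fin n) K ^ k) (T : Finset (Fin n)) :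
    koszulDiff (X (R := K)) c T ∈ idealOfVars (Fin n) K ^ (k + 1) := by
  rw [pow_succ']
  exact koszulDiff_apply_mem_mul (fun i => Ideal.subset_span (Set.mem_range_self i)) hc T

/-- If `sqMonCochain α` were a boundary modulo `I`, its differential would be the differential of a
cochain with values in `I`, of too large a degree. -/
theorem not_koszulVanishesBelow_quotient (hIk : I ≤ idealOfVars (Fin n) K ^ (k + 1))
    {α : Finset (Fin n) → K} (hα : α ∈ cochainsLT K (k + 1))
    (hdα : koszulDiff (1 : Fin n → K) α ≠ 0)
    (hdαI : ∀ T, koszulDiff (1 : Fin n → K) α T ≠ 0 → sqMon K T ∈ I) :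
    ¬KoszulVanishesBelow (X (σ := Fin n) (R := K)) (MvPolynomial (Fin n) K ⧸ I) (k + 1) := by
  intro h
  obtain ⟨u, hu⟩ := h (I.mkQ ∘ sqMonCochain α)
    (comp_mem_cochainsLT I.mkQ (sqMonCochain_mem_cochainsLT hα)) (by
      rw [koszulDiff_comp, koszulDiff_sqMonCochain]
      exact funext fun T => (Submodule.Quotient.mk_eq_zero I).2 (sqMonCochain_mem hdαI T))
  obtain ⟨v, rfl⟩ := I.mkQ_surjective.comp_left u
  rw [koszulDiff_comp] at hu
  have hmem (T : Finset (Fin n)) : (sqMonCochain α - koszulDiff (X (R := K)) v) T ∈ I :=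
    (Submodule.Quotient.eq I).1 (congrFun hu T).symm
  refine hdα (eq_zero_of_sqMonCochain_mem_pow_idealOfVars (koszulDiff_mem_cochainsLT hα)
    fun T => ?_)
  have hdmem := koszulDiff_mem_pow_succ_idealOfVars (fun T => hIk (hmem T)) T
  rwa [map_sub, koszulDiff_koszulDiff, sub_zero, koszulDiff_sqMonCochain] at hdmem

/-- The coefficients of a boundary modulo `B` lie in degrees greater than those of
`sqMonCochain α`. -/
theorem not_koszulVanishesBelow_idealQuot (hAk : A ≤ idealOfVars (Fin n) K ^ k)
    (hBk : B ≤ idealOfVars (Fin n) K ^ (k + 1)) {α : Finset (Fin n) → K}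
    (hα : α ∈ cochainsLT K (k + 1)) (hα0 : α ≠ 0) (hαA : ∀ T, α T ≠ 0 → sqMon K T ∈ A)
    (hdαB : ∀ T, koszulDiff (1 : Fin n → K) α T ≠ 0 → sqMon K T ∈ B) :
    ¬KoszulVanishesBelow (X (σ := Fin n) (R := K)) (idealQuot A B) (k + 1) := by
  intro h
  let N := Submodule.comap A.subtype B
  let c (T : Finset (Fin n)) : A := ⟨sqMonCochain α T, sqMonCochain_mem hαA T⟩
  have hdiff (w : Finset (Fin n) → A) (T : Finset (Fin n)) :
      A.subtype (koszulDiff (X (R := K)) w T) = koszulDiff (X (R := K)) (A.subtype ∘ w) T :=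
    (congrFun (koszulDiff_comp _ A.subtype w) T).symm
  have hc : c ∈ cochainsLT (MvPolynomial (Fin n) K) (k + 1) := fun T hT =>
    Subtype.ext (sqMonCochain_mem_cochainsLT hα T hT)
  obtain ⟨u, hu⟩ := h (N.mkQ ∘ c) (comp_mem_cochainsLT N.mkQ hc) (by
    rw [koszulDiff_comp]
    refine funext fun T => (Submodule.Quotient.mk_eq_zero N).2 ?_
    rw [Submodule.mem_comap, hdiff]
    exact koszulDiff_sqMonCochain α ▸ sqMonCochain_mem hdαB T)
  obtain ⟨v, rfl⟩ := N.mkQ_surjective.comp_left u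
  rw [koszulDiff_comp] at hu
  refine hα0 (eq_zero_of_sqMonCochain_mem_pow_idealOfVars hα fun T => ?_)
  have hmem : sqMonCochain α T - A.subtype (koszulDiff (X (R := K)) v T) ∈ B :=
    (Submodule.Quotient.eq N).1 (congrFun hu T).symm
  have hdv : A.subtype (koszulDiff (X (R := K)) v T) ∈ idealOfVars (Fin n) K ^ (k + 1) := by
    rw [hdiff]
    exact koszulDiff_mem_pow_succ_idealOfVars (fun T => hAk (v T).2) T
  simpa using add_mem (hBk hmem) hdv

end Nonvanishing

section LinearDependence

variable {K : Type} [Field K] {n : ℕ}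

theorem exists_ne_zero_map_eq_zero_on_of_ncard_lt {ι η θ : Type*} [Fintype ι] [Finite θ]
    (D : (η → K) →ₗ[K] θ → K) {g : ι → η} (hg : Function.Injective g) {W : Set θ}
    (hW : W.ncard < Fintype.card ι) :
    ∃ α : η → K, α ≠ 0 ∧ (∀ t, α t ≠ 0 → t ∈ Set.range g) ∧ ∀ w ∈ W, D α w = 0 := by
  let ext : (ι → K) →ₗ[K] η → K := Function.ExtendByZero.linearMap K g
  have := Fintype.ofFinite W
  have hker : LinearMap.ker (LinearMap.funLeft K K ((↑) : W → θ) ∘ₗ D ∘ₗ ext) ≠ ⊥ := by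
    apply LinearMap.ker_ne_bot_of_finrank_lt
    rwa [Module.finrank_fintype_fun_eq_card, Module.finrank_fintype_fun_eq_card,
      ← Nat.card_eq_fintype_card (α := W)]
  obtain ⟨a, ha, ha0⟩ := Submodule.exists_mem_ne_zero_of_ne_bot hker
  refine ⟨ext a, fun h => ha0 (funext fun i => ?_), fun t ht => ?_, fun w hw => ?_⟩
  · simpa [ext, hg.extend_apply] using congrFun h (g i)
  · by_contra hrange
    exact ht (Function.extend_apply' _ _ _ hrange)
  · exact congrFun ha ⟨w, hw⟩

/-- The square-free monomials of degree `d` counted by `ρ_d(U) - ρ_d(U ∩ V)`. -/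
def sqMonDiff (K : Type) [Field K] {n : ℕ} (d : ℕ) (U V : Ideal (MvPolynomial (Fin n) K)) :
    Set (Finset (Fin n)) :=
  {T | #T = d ∧ sqMon K T ∈ U ∧ sqMon K T ∉ V}

variable {U V : Ideal (MvPolynomial (Fin n) K)}

theorem ncard_sqMonDiff (d : ℕ) :
    (sqMonDiff K d U V).ncard = rho K d U - rho K d (U ⊓ V) := by
  have hdiff : sqMonDiff K d U V =
      {T | #T = d ∧ sqMon K T ∈ U} \ {T | #T = d ∧ sqMon K T ∈ U ⊓ V} := by
    ext T
    simp only [sqMonDiff, Set.mem_sdiff, Set.mem_ofPred_eq, Submodule.mem_inf]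
    tauto
  rw [hdiff]
  exact Set.ncard_sdiff fun T hT => ⟨hT.1, hT.2.1⟩

theorem sqMon_insert_mem_of_notMem_sqMonDiff {T : Finset (Fin n)} {j : Fin n} (hj : j ∉ T)
    (hTU : sqMon K T ∈ U) (h : insert j T ∉ sqMonDiff K (#T + 1) U V) :
    sqMon K (insert j T) ∈ V := by
  by_contra hV
  exact h ⟨Finset.card_insert_of_notMem hj,
    U.mem_of_dvd (sqMon_dvd_sqMon (Finset.subset_insert j T)) hTU, hV⟩

variable {ι : Type*} {k : ℕ} [Fintype ι] {f : ι → Finset (Fin n)}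

theorem not_koszulVanishesBelow_idealQuot_of_ncard_lt {A : Ideal (MvPolynomial (Fin n) K)}
    (hAk : A ≤ idealOfVars (Fin n) K ^ k) (hVk : V ≤ idealOfVars (Fin n) K ^ (k + 1)) (hUA : U ≤ A)
    (hf : Function.Injective f) (hfk : ∀ i, #(f i) = k) (hfU : ∀ i, sqMon K (f i) ∈ U)
    (hcard : (sqMonDiff K (k + 1) U V).ncard < Fintype.card ι) :
    ¬KoszulVanishesBelow (X (σ := Fin n) (R := K)) (idealQuot A V) (k + 1) := by
  obtain ⟨α, hα0, hαf, hdα⟩ := exists_ne_zero_map_eq_zero_on_of_ncard_lt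
    (koszulDiff (1 : Fin n → K)) hf hcard
  refine not_koszulVanishesBelow_idealQuot hAk hVk (mem_cochainsLT_of_mem_range hfk hαf) hα0
    (fun T hT => ?_) fun T hT => ?_
  · obtain ⟨i, rfl⟩ := hαf T hT
    exact hUA (hfU i)
  · obtain ⟨i, j, hj, rfl⟩ := exists_eq_insert_of_koszulDiff_ne_zero hαf hT
    refine sqMon_insert_mem_of_notMem_sqMonDiff hj (hfU i) fun hmem => hT (hdα _ ?_)
    rwa [hfk] at hmem

/-- A dependency among the differentials of the `f_i` modulo `V` stays one modulo `I` after adding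
the last variable, as `x_n f_i ∈ I`. -/
theorem not_koszulVanishesBelow_quotient_of_ncard_lt {I : Ideal (MvPolynomial (Fin (n + 1)) K)}
    (hIk : I ≤ idealOfVars (Fin (n + 1)) K ^ (k + 1)) (hf : Function.Injective f)
    (hfk : ∀ i, #(f i) = k) (hfU : ∀ i, sqMon K (f i) ∈ U)
    (hfI : ∀ i, sqMon K (insert (Fin.last n) ((f i).image Fin.castSucc)) ∈ I)
    (hcard : (sqMonDiff K (k + 1) U (I.comap (rename Fin.castSucc))).ncard < Fintype.card ι) :
    ¬KoszulVanishesBelow (X (σ := Fin (n + 1)) (R := K))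
      (MvPolynomial (Fin (n + 1)) K ⧸ I) (k + 1) := by
  have hinj := Fin.castSucc_injective n
  rw [← Set.ncard_image_of_injective _ (Finset.image_injective hinj)] at hcard
  obtain ⟨α, hα0, hαf, hdα⟩ := exists_ne_zero_map_eq_zero_on_of_ncard_lt
    (koszulDiff (1 : Fin (n + 1) → K)) ((Finset.image_injective hinj).comp hf) hcard
  have hlast (T : Finset (Fin (n + 1))) (hT : α T ≠ 0) : Fin.last n ∉ T := by
    obtain ⟨i, rfl⟩ := hαf T hT
    simp
  refine not_koszulVanishesBelow_quotient hIk (mem_cochainsLT_of_mem_range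
    (fun i => by simp [Finset.card_image_of_injective _ hinj, hfk]) hαf)
    (koszulDiff_one_ne_zero_of_notMem hα0 hlast) fun T hT => ?_
  obtain ⟨i, j, hj, rfl⟩ := exists_eq_insert_of_koszulDiff_ne_zero hαf hT
  induction j using Fin.lastCases with
  | last => exact hfI i
  | cast j =>
    rw [Function.comp_apply, ← Finset.image_insert] at hT ⊢
    rw [← rename_sqMon hinj, ← Ideal.mem_comap]
    refine sqMon_insert_mem_of_notMem_sqMonDiff (fun h => hj (Finset.mem_image_of_mem _ h)) (hfU i)
      fun hmem => hT (hdα _ (Set.mem_image_of_mem _ ?_))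
    rwa [hfk] at hmem

end LinearDependence

theorem stmt_14_general {n : ℕ} {K : Type} [Field K] {k : ℕ}
    {I : Ideal (MvPolynomial (Fin (n + 1)) K)} (hI : GenBySqMonOfDeg K (fun j => k + 1 ≤ j) I)
    {ι : Type*} [Fintype ι] {f : ι → Finset (Fin n)} (hf : Function.Injective f)
    (hfk : ∀ i, #(f i) = k)
    (hfI : ∀ i, sqMon K (insert (Fin.last n) ((f i).image Fin.castSucc)) ∈ I)
    {U V : Ideal (MvPolynomial (Fin n) K)} (hU : U = Ideal.span (Set.range fun i => sqMon K (f i)))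
    (hV : V = I.comap (rename Fin.castSucc))
    (hcard : rho K (k + 1) U - rho K (k + 1) (U ⊓ V) < Fintype.card ι) :
    moduleDepth (maxGraded K (n + 1)) (MvPolynomial (Fin (n + 1)) K ⧸ I) = k ∧
      moduleDepth (maxGraded K n) (idealQuot (U ⊔ V) V) = k := by
  have hIk := hI.le_pow_idealOfVars
  have hinj := Fin.castSucc_injective n
  have hVk : V ≤ idealOfVars (Fin n) K ^ (k + 1) := hV ▸ comap_rename_le_pow_idealOfVars hinj hIk
  have hVsq : IsSqMonIdeal V := hV ▸ hI.isSqMonIdeal.comap_rename hinj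
  have hUgen : GenBySqMonOfDeg K (fun j => k ≤ j) U :=
    ⟨Set.range f, by simp [hfk], by rw [hU, ← Set.range_comp]; rfl⟩
  have hUVk : U ⊔ V ≤ idealOfVars (Fin n) K ^ k :=
    sup_le hUgen.le_pow_idealOfVars (hVk.trans (Ideal.pow_le_pow_right k.le_succ))
  have hfU (i : ι) : sqMon K (f i) ∈ U := hU ▸ Ideal.subset_span ⟨i, rfl⟩
  have hkn : k ≤ n + 1 := by
    obtain ⟨i⟩ := Fintype.card_pos_iff.1 (Nat.zero_lt_of_lt hcard)
    exact hfk i ▸ (card_finset_fin_le (f i)).trans n.le_succ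
  rw [← ncard_sqMonDiff] at hcard
  refine ⟨moduleDepth_eq_of_koszulVanishesBelow
      (koszulVanishesBelow_quotient hI.isSqMonIdeal hIk hkn)
      (not_koszulVanishesBelow_quotient_of_ncard_lt hIk hf hfk hfU hfI (hV ▸ hcard)),
    moduleDepth_eq_of_koszulVanishesBelow
      (koszulVanishesBelow_idealQuot (hUgen.isSqMonIdeal.sup hVsq) hVsq hUVk)
      (not_koszulVanishesBelow_idealQuot_of_ncard_lt hUVk hVk le_sup_left hf hfk hfU hcard)⟩

/-- Theorem 3.3.  Here `S' = K[x_1,…,x_n]` is embedded in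
`S = S'[x_{n+1}] = K[x_1,…,x_{n+1}]` via `rename Fin.castSucc`, and the last
variable `X (Fin.last n)` plays the role of `x_n` of the paper.  The square-free
monomials of degree `d` of `I ∩ (x_n)` are exactly the `x_n·f i`, encoded as the
sets `insert (Fin.last n) ((f i).image Fin.castSucc)`. -/
theorem stmt_14 (n : ℕ) (K : Type) [Field K] (d : ℕ) (hd : 0 < d)
    (I : Ideal (MvPolynomial (Fin (n + 1)) K))
    (hI : GenBySqMonOfDeg K (fun k => d ≤ k) I)
    (r : ℕ) (hr : 0 < r) (f : Fin r → Finset (Fin n)) (hfinj : Function.Injective f)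
    (hfd : ∀ i, (f i).card + 1 = d)
    (hmem : ∀ i, sqMon K (insert (Fin.last n) ((f i).image Fin.castSucc)) ∈ I)
    (hall : ∀ T : Finset (Fin (n + 1)), T.card = d → sqMon K T ∈ I →
      Fin.last n ∈ T → ∃ i, T = insert (Fin.last n) ((f i).image Fin.castSucc))
    (U V : Ideal (MvPolynomial (Fin n) K))
    (hU : U = Ideal.span (Set.range fun i => sqMon K (f i)))
    (hV : V = Ideal.comap (rename Fin.castSucc) I)
    (hrs : rho K d U - rho K d (U ⊓ V) < r) :
    moduleDepth (maxGraded K (n + 1)) (MvPolynomial (Fin (n + 1)) K ⧸ I) =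
        ((d - 1 : ℕ) : ℕ∞) ∧
      moduleDepth (maxGraded K n) (idealQuot (U ⊔ V) V) = ((d - 1 : ℕ) : ℕ∞) := by
  obtain ⟨k, rfl⟩ := Nat.exists_eq_succ_of_ne_zero hd.ne'
  exact stmt_14_general hI hfinj (fun i => Nat.succ_injective (hfd i)) hmem hU hV
    (by simpa using hrs)
end
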